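/- arXiv:2201.01844 — 3 statements merged into one kernel-verified Lean document; each statement's English description precedes it below -/
import Mathlib

section
/- There are universal constants C, c > 0 such that the following holds. For every ε ∈ (0,1) and every finite set D of n disks in the plane in general position, setting α = ⌈c·(ε^{-2} + 4·ln n)⌉, there exists a subgraph H of the intersection graph IG(D) with at most C·ε^{-4}·n·(1+log n)^2 edges such that: (i) for every point p ∈ ℝ² with depth_D(p) ≤ α, the induced subgraph of H on D⊓p = {d ∈ D : p ∈ d} is a complete graph; and (ii) for every point p ∈ ℝ² with depth_D(p) > α, the induced subgraph of H on D⊓p is an (ε/4)-connector. -/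
open Metric Set
open scoped Classical

noncomputable section

abbrev Plane : Type := EuclideanSpace ℝ (Fin 2)

/-- A disk is a closed ball of positive radius in the plane. -/
def IsDisk (d : Set Plane) : Prop :=
  ∃ (c : Plane) (r : ℝ), 0 < r ∧ d = Metric.closedBall c r

/-- The depth of a point `p` in a finite family `D` of disks:
the number of disks of `D` containing `p`. -/
def diskDepth (D : Finset (Set Plane)) (p : Plane) : ℕ :=
  {d : Set Plane | d ∈ D ∧ p ∈ d}.ncard

/-- General position: no two boundary circles are tangent (meet in exactly one
point), and no three boundary circles pass through a common point.  (All disks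
are automatically distinct, since `D` is a finite set of point sets.) -/
def GeneralPosition (D : Finset (Set Plane)) : Prop :=
  (∀ d₁ ∈ D, ∀ d₂ ∈ D, d₁ ≠ d₂ → ¬ ∃ p : Plane, frontier d₁ ∩ frontier d₂ = {p}) ∧
  (∀ d₁ ∈ D, ∀ d₂ ∈ D, ∀ d₃ ∈ D, d₁ ≠ d₂ → d₁ ≠ d₃ → d₂ ≠ d₃ →
      frontier d₁ ∩ frontier d₂ ∩ frontier d₃ = ∅)

/-- The intersection graph of a finite family of disks: two distinct disks are
adjacent iff they intersect. -/
def IG (D : Finset (Set Plane)) : SimpleGraph {d // d ∈ D} :=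
  SimpleGraph.fromRel (fun d₁ d₂ => (d₁.1 ∩ d₂.1).Nonempty)

/-- The ε-safe zone for disks `D` and attack set `B`: the set of points `p`
with `depth_{D∖B}(p) ≥ ε·depth_D(p)`. -/
def SafeZone (ε : ℝ) (D B : Finset (Set Plane)) : Set Plane :=
  {p | ε * (diskDepth D p : ℝ) ≤
        (({d : Set Plane | d ∈ D ∧ d ∉ B ∧ p ∈ d}).ncard : ℝ)}

/-- Two points are ε-safely connected if they lie in the same topological
connected component of the ε-safe zone. -/
def SafelyConnected (ε : ℝ) (D B : Finset (Set Plane)) (p q : Plane) : Prop :=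
  q ∈ connectedComponentIn (SafeZone ε D B) p

/-- The neighborhood of a set `S` of vertices in a graph `G`. -/
def Nbhd {V : Type*} (G : SimpleGraph V) (S : Set V) : Set V :=
  {x | ∃ y ∈ S, G.Adj x y}

/-- A graph on a finite vertex type `V` with `ν` vertices is an `ε`-connector
if every vertex set `S` with `|S| ≥ εν` has `|N(S)| > (1-ε)ν`. -/
def IsConnector {V : Type*} (ε : ℝ) (G : SimpleGraph V) : Prop :=
  ∀ S : Set V, ε * (Nat.card V : ℝ) ≤ (S.ncard : ℝ) →
    (1 - ε) * (Nat.card V : ℝ) < ((Nbhd G S).ncard : ℝ)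

/-!
Call a pair of disks `k`-shallow if some point of depth at most `k` lies in both of them.

* A disk containing `p` but not `q` has its centre nearer to `p` than to `q`. So the bisector of `p`
  and `q` separates the centres of the disks containing only `p` from those containing only `q`.
* By Radon's theorem the sets `D ⊓ p` therefore have VC dimension at most `3`, and by Sauer–Shelah
  there are `O(n ^ 3)` of them.
* In a subfamily, join the centres of two disks if some point lies in exactly these two. Disjoint
  edges of this drawing are separated by a bisector, hence do not cross, and this leaves
  `O(n log n)` edges: halve the centres by a vertical line; the edges meeting that line, sorted by
  height, have endpoints forming Davenport–Schinzel sequences of order two. By Clarkson–Shor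
  sampling there are `O(k n log n)` pairs that are `k`-shallow.
* Select every `α`-shallow pair, and every other pair independently with probability proportional
  to `ε⁻¹ ^ 2 / k`, where `k` is the least depth at which the pair is shallow. Summing over `k`
  the expected number of selected pairs is `O(ε⁻¹ ^ 2 n log ^ 2 n)`. If `p` has depth `m > α`, two
  given `ε / 4`-fractions of `D ⊓ p` remain unjoined with probability at most `exp (-3 m)`; the
  union bound over the `4 ^ m` such pairs of sets and the `O(n ^ 3)` sets `D ⊓ p` closes the
  argument.
-/

/-! ### Radial sets and the ranges they induce -/

section Radial

variable {V E : Type*}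

/-- A set is radial about `c` if its points are nearer to `c` than all other points. These are the
open and the closed balls centred at `c`, together with `∅` and the whole space; only this
comparison of distances enters the argument. -/
def IsRadial [PseudoMetricSpace E] (c : E) (s : Set E) : Prop :=
  ∀ p ∈ s, ∀ q ∉ s, dist c p < dist c q

lemma isRadial_closedBall [PseudoMetricSpace E] (c : E) (r : ℝ) :
    IsRadial c (closedBall c r) := by
  intro p hp q hq
  rw [mem_closedBall'] at hp hq
  linarith

lemma isRadial_of_isDisk {d : Set Plane} (hd : IsDisk d) : ∃ c, IsRadial c d := by
  obtain ⟨c, r, -, rfl⟩ := hd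
  exact ⟨c, isRadial_closedBall c r⟩

/-- The indices of the members of the family `B` that contain `p`. -/
def covering [Fintype V] (B : V → Set E) (p : E) : Finset V := {i | p ∈ B i}

/-- The range space of the family `B`: all index sets cut out by a point. -/
def coverings [Fintype V] (B : V → Set E) : Finset (Finset V) := {Q | ∃ p, covering B p = Q}

variable [Fintype V] {B : V → Set E} {p : E}

@[simp]
lemma mem_covering {i : V} : i ∈ covering B p ↔ p ∈ B i := by
  simp [covering]

@[simp]
lemma mem_coverings {Q : Finset V} : Q ∈ coverings B ↔ ∃ p, covering B p = Q := by
  simp [coverings]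

variable [NormedAddCommGroup E] [InnerProductSpace ℝ E]

lemma dist_lt_dist_iff_inner (x p q : E) :
    dist x p < dist x q ↔ 2 * inner ℝ (q - p) x < ‖q‖ ^ 2 - ‖p‖ ^ 2 := by
  rw [dist_eq_norm, dist_eq_norm, ← sq_lt_sq₀ (norm_nonneg _) (norm_nonneg _), norm_sub_sq_real,
    norm_sub_sq_real, inner_sub_left, real_inner_comm, real_inner_comm q x]
  constructor <;> intro h <;> linarith

lemma convex_setOf_dist_lt_dist (p q : E) : Convex ℝ {x | dist x p < dist x q} := by
  simp only [dist_lt_dist_iff_inner]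
  exact convex_halfSpace_lt (f := fun x : E => 2 * inner ℝ (q - p) x)
    (((2 : ℝ) • innerₛₗ ℝ (q - p)).isLinear) _

variable {c : V → E}

lemma card_le_finrank_succ_of_shatters [FiniteDimensional ℝ E] (hB : ∀ i, IsRadial (c i) (B i))
    {s : Finset V} (hs : (coverings B).Shatters s) : s.card ≤ Module.finrank ℝ E + 1 := by
  by_contra! hcard
  have dependent : ¬ AffineIndependent ℝ fun i : s => c i := fun h => by
    have := h.card_le_finrank_succ.trans (Nat.succ_le_succ (Submodule.finrank_le _))
    rw [Fintype.card_coe] at this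
    omega
  obtain ⟨I, x, hxI, hxIc⟩ := Convex.radon_partition dependent
  have cut (J : Set s) : ∃ p, ∀ i : s, p ∈ B i ↔ i ∈ J := by
    obtain ⟨Q, hQ, hQs⟩ := hs (t := (Finset.univ.filter (· ∈ J)).map (.subtype _))
      (by intro i; simp +contextual)
    obtain ⟨p, rfl⟩ := mem_coverings.1 hQ
    refine ⟨p, fun i => ?_⟩
    simpa using congrArg ((i : V) ∈ ·) hQs
  obtain ⟨p, hp⟩ := cut I
  obtain ⟨q, hq⟩ := cut Iᶜ
  have nearer_p : x ∈ {x | dist x p < dist x q} := by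
    refine convexHull_min ?_ (convex_setOf_dist_lt_dist p q) hxI
    rintro _ ⟨i, hi, rfl⟩
    exact hB i p ((hp i).2 hi) q fun h => (hq i).1 h hi
  have nearer_q : x ∈ {x | dist x q < dist x p} := by
    refine convexHull_min ?_ (convex_setOf_dist_lt_dist q p) hxIc
    rintro _ ⟨i, hi, rfl⟩
    exact hB i q ((hq i).2 hi) p fun h => hi ((hp i).1 h)
  exact lt_asymm (mem_ofPred.1 nearer_p) (mem_ofPred.1 nearer_q)

lemma card_le_of_vcDim_le {𝒜 : Finset (Finset V)} {d : ℕ} (h𝒜 : 𝒜.vcDim ≤ d)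
    (hV : 0 < Fintype.card V) : 𝒜.card ≤ (d + 1) * Fintype.card V ^ d := by
  calc 𝒜.card
      ≤ ∑ k ∈ Finset.Iic 𝒜.vcDim, (Fintype.card V).choose k :=
        𝒜.card_le_card_shatterer.trans Finset.card_shatterer_le_sum_vcDim
    _ ≤ ∑ k ∈ Finset.Iic d, (Fintype.card V).choose k :=
        Finset.sum_le_sum_of_subset (Finset.Iic_subset_Iic.2 h𝒜)
    _ ≤ ∑ _k ∈ Finset.Iic d, Fintype.card V ^ d :=
        Finset.sum_le_sum fun k hk => (Nat.choose_le_pow _ k).trans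
          (Nat.pow_le_pow_right hV (Finset.mem_Iic.1 hk))
    _ = (d + 1) * Fintype.card V ^ d := by simp

lemma card_coverings_le [FiniteDimensional ℝ E] (hB : ∀ i, IsRadial (c i) (B i))
    (hV : 0 < Fintype.card V) :
    (coverings B).card ≤
      (Module.finrank ℝ E + 2) * Fintype.card V ^ (Module.finrank ℝ E + 1) :=
  card_le_of_vcDim_le (Finset.sup_le fun _ hs =>
    card_le_finrank_succ_of_shatters hB (Finset.mem_shatterer.1 hs)) hV

end Radial

/-! ### Davenport–Schinzel sequences of order two -/

section DavenportSchinzel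

variable {α : Type*} {n : ℕ}

/-- A finite sequence without a subsequence `a, b, a, b` for distinct `a` and `b`. -/
def AlternationFree (s : Fin n → α) : Prop :=
  ∀ ⦃i j k l⦄, i < j → j < k → k < l → s i = s k → s j = s l → s i = s j

/-- The positions at which the sequence `s` changes its value. -/
def changes (s : Fin (n + 1) → α) : Finset (Fin n) := {i | s i.castSucc ≠ s i.succ}

lemma AlternationFree.last_or_first_of_mem_changes {s : Fin (n + 1) → α} (hs : AlternationFree s)
    {i : Fin n} (hi : i ∈ changes s) :
    (∀ j > i.castSucc, s j ≠ s i.castSucc) ∨ ∀ j < i.succ, s j ≠ s i.succ := by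
  by_contra! h
  obtain ⟨⟨k, hik, hk⟩, j, hji, hj⟩ := h
  have change : s i.castSucc ≠ s i.succ := by simpa [changes] using hi
  have hik' : i.succ < k :=
    (Fin.castSucc_lt_iff_succ_le.1 hik).lt_of_ne fun h => change (h ▸ hk.symm)
  have hji' : j < i.castSucc :=
    (Fin.le_castSucc_iff.2 hji).lt_of_ne fun h => change (h ▸ hj)
  exact change ((hs hji' i.castSucc_lt_succ hik' hj hk.symm).symm.trans hj)

lemma AlternationFree.card_changes_le {s : Fin (n + 1) → α} (hs : AlternationFree s) {A : Finset α}
    (hA : ∀ i, s i ∈ A) : (changes s).card ≤ 2 * A.card := by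
  let last : Finset (Fin n) := {i | ∀ j > i.castSucc, s j ≠ s i.castSucc}
  let first : Finset (Fin n) := {i | ∀ j < i.succ, s j ≠ s i.succ}
  have card_last : last.card ≤ A.card := by
    refine Finset.card_le_card_of_injOn (fun i => s i.castSucc) (fun i _ => hA _) ?_
    intro i hi j hj (hij : s i.castSucc = s j.castSucc)
    simp only [last, Finset.coe_filter, Finset.mem_univ, true_and, mem_ofPred_eq] at hi hj
    rcases lt_trichotomy i j with h | h | h
    · exact absurd hij.symm (hi _ (Fin.castSucc_lt_castSucc_iff.2 h))
    · exact h
    · exact absurd hij (hj _ (Fin.castSucc_lt_castSucc_iff.2 h))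
  have card_first : first.card ≤ A.card := by
    refine Finset.card_le_card_of_injOn (fun i => s i.succ) (fun i _ => hA _) ?_
    intro i hi j hj (hij : s i.succ = s j.succ)
    simp only [first, Finset.coe_filter, Finset.mem_univ, true_and, mem_ofPred_eq] at hi hj
    rcases lt_trichotomy i j with h | h | h
    · exact absurd hij (hj _ (Fin.succ_lt_succ_iff.2 h))
    · exact h
    · exact absurd hij.symm (hi _ (Fin.succ_lt_succ_iff.2 h))
  have cover : changes s ⊆ last ∪ first := fun i hi => by
    simpa [last, first] using hs.last_or_first_of_mem_changes hi
  have := (Finset.card_le_card cover).trans (Finset.card_union_le last first)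
  omega

end DavenportSchinzel

/-! ### Straight-line drawings without crossings -/

section Drawing

variable {V : Type*} {x y : V → ℝ} {e e' e₁ e₂ e₃ : V × V} {S : Finset (V × V)}

/-- With the vertex `v` drawn at `(x v, y v)`, the height at which the line through `e` meets the
vertical line at abscissa `t` (junk if the segment `e` is vertical). -/
def height (x y : V → ℝ) (e : V × V) (t : ℝ) : ℝ :=
  AffineMap.lineMap (y e.1) (y e.2) ((t - x e.1) / (x e.2 - x e.1))

/-- With the vertex `v` drawn at `(x v, y v)`, the segments `e` and `e'` lie strictly on opposite
sides of the line `a * X + b * Y + k = 0`. -/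
def Separated (x y : V → ℝ) (e e' : V × V) : Prop :=
  ∃ a b k : ℝ, (a * x e.1 + b * y e.1 + k < 0 ∧ a * x e.2 + b * y e.2 + k < 0) ∧
    (0 < a * x e'.1 + b * y e'.1 + k ∧ 0 < a * x e'.2 + b * y e'.2 + k)

/-- A straight-line drawing in which no two vertex-disjoint edges cross, expressed by a separating
line for each such pair. Edges sharing a vertex are unrestricted: they may even overlap. -/
def NonCrossing (x y : V → ℝ) (S : Finset (V × V)) : Prop :=
  ∀ e ∈ S, ∀ e' ∈ S, e.1 ≠ e'.1 → e.1 ≠ e'.2 → e.2 ≠ e'.1 → e.2 ≠ e'.2 → Separated x y e e'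

lemma NonCrossing.mono (hS : NonCrossing x y S) {T : Finset (V × V)} (hT : T ⊆ S) :
    NonCrossing x y T :=
  fun e he e' he' => hS e (hT he) e' (hT he')

lemma Separated.reflect (h : Separated x y e e') : Separated (-x) y e e' := by
  obtain ⟨a, b, k, he, he'⟩ := h
  exact ⟨-a, b, k, by simpa using he, by simpa using he'⟩

lemma Separated.swap (h : Separated x y e e') : Separated x y e.swap e'.swap := by
  obtain ⟨a, b, k, he, he'⟩ := h
  exact ⟨a, b, k, he.symm, he'.symm⟩

lemma NonCrossing.reflect (hS : NonCrossing x y S) : NonCrossing (-x) y S :=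
  fun e he e' he' h₁ h₂ h₃ h₄ => (hS e he e' he' h₁ h₂ h₃ h₄).reflect

lemma NonCrossing.image_swap (hS : NonCrossing x y S) : NonCrossing x y (S.image Prod.swap) := by
  intro e he e' he' h₁ h₂ h₃ h₄
  obtain ⟨f, hf, rfl⟩ := Finset.mem_image.1 he
  obtain ⟨f', hf', rfl⟩ := Finset.mem_image.1 he'
  exact (hS f hf f' hf' h₄ h₃ h₂ h₁).swap

lemma height_fst (x y : V → ℝ) (e : V × V) : height x y e (x e.1) = y e.1 := by
  simp [height]

lemma height_reflect_swap (he : x e.1 ≠ x e.2) (t : ℝ) :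
    height (-x) y e.swap (-t) = height x y e t := by
  have h : x e.2 - x e.1 ≠ 0 := sub_ne_zero.2 he.symm
  simp only [height, AffineMap.lineMap_apply_ring', Prod.fst_swap, Prod.snd_swap, Pi.neg_apply]
  rw [show -x e.1 - -x e.2 = x e.2 - x e.1 by ring]
  field_simp
  ring

lemma height_eq_sub_snd (he : x e.1 < x e.2) (t : ℝ) :
    height x y e t = y e.2 - (y e.2 - y e.1) / (x e.2 - x e.1) * (x e.2 - t) := by
  have : x e.2 - x e.1 ≠ 0 := (sub_pos.2 he).ne'
  simp only [height, AffineMap.lineMap_apply_ring']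
  field_simp
  ring

lemma affine_height_mem (he : x e.1 < x e.2) {t : ℝ} (ht : t ∈ Icc (x e.1) (x e.2)) {s : Set ℝ}
    (hs : Convex ℝ s) {a b k : ℝ} (h₁ : a * x e.1 + b * y e.1 + k ∈ s)
    (h₂ : a * x e.2 + b * y e.2 + k ∈ s) : a * t + b * height x y e t + k ∈ s := by
  have hpos : 0 < x e.2 - x e.1 := sub_pos.2 he
  have hparam : (t - x e.1) / (x e.2 - x e.1) ∈ Icc (0 : ℝ) 1 :=
    ⟨div_nonneg (sub_nonneg.2 ht.1) hpos.le, (div_le_one hpos).2 (by linarith [ht.2])⟩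
  convert hs.lineMap_mem h₁ h₂ hparam using 1
  simp only [height, AffineMap.lineMap_apply_ring']
  field_simp
  ring

lemma Separated.height_sub_mul_pos (h : Separated x y e e') (he : x e.1 < x e.2)
    (he' : x e'.1 < x e'.2) {t t' : ℝ} (ht : t ∈ Icc (x e.1) (x e.2) ∩ Icc (x e'.1) (x e'.2))
    (ht' : t' ∈ Icc (x e.1) (x e.2) ∩ Icc (x e'.1) (x e'.2)) :
    0 < (height x y e t - height x y e' t) * (height x y e t' - height x y e' t') := by
  obtain ⟨a, b, k, ⟨h₁, h₂⟩, h₁', h₂'⟩ := h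
  have below {t : ℝ} (ht : t ∈ Icc (x e.1) (x e.2) ∩ Icc (x e'.1) (x e'.2)) :
      b * (height x y e t - height x y e' t) < 0 := by
    have := affine_height_mem he ht.1 (convex_Iio 0) h₁ h₂
    have := affine_height_mem he' ht.2 (convex_Ioi 0) h₁' h₂'
    simp only [mem_Iio, mem_Ioi] at *
    linarith
  have := mul_pos_of_neg_of_neg (below ht) (below ht')
  refine pos_of_mul_pos_right (a := b ^ 2) ?_ (sq_nonneg b)
  linarith

lemma NonCrossing.height_sub_mul_pos (hS : NonCrossing x y S) (he : e ∈ S) (he' : e' ∈ S)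
    (hfst : e.1 ≠ e'.1) (hsnd : e.2 ≠ e'.2) (hx : x e'.1 ≤ x e.1) {m : ℝ}
    (hm : m ∈ Ioo (x e.1) (x e.2)) (hm' : m ∈ Ioo (x e'.1) (x e'.2)) {t t' : ℝ}
    (ht : t ∈ Icc (x e.1) m) (ht' : t' ∈ Icc (x e.1) m) :
    0 < (height x y e t - height x y e' t) * (height x y e t' - height x y e' t') := by
  have spans {t : ℝ} (ht : t ∈ Icc (x e.1) m) :
      t ∈ Icc (x e.1) (x e.2) ∩ Icc (x e'.1) (x e'.2) :=
    ⟨⟨ht.1, ht.2.trans hm.2.le⟩, hx.trans ht.1, ht.2.trans hm'.2.le⟩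
  exact (hS e he e' he' hfst (ne_of_apply_ne x (hm.1.trans hm'.2).ne)
    (ne_of_apply_ne x (hm'.1.trans hm.2).ne') hsnd).height_sub_mul_pos
    (hm.1.trans hm.2) (hm'.1.trans hm'.2) (spans ht) (spans ht')

lemma NonCrossing.exists_height_sub_eq_mul (hS : NonCrossing x y S) (he : e ∈ S) (he' : e' ∈ S)
    (hfst : e.1 ≠ e'.1) (hx : x e'.1 ≤ x e.1) {m : ℝ} (hm : m ∈ Ioo (x e.1) (x e.2))
    (hm' : m ∈ Ioo (x e'.1) (x e'.2)) :
    ∃ c > 0, y e.1 - height x y e' (x e.1) = c * (height x y e m - height x y e' m) := by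
  rw [← height_fst x y e]
  by_cases hsnd : e.2 = e'.2
  · have hr : 0 < x e.2 - m := sub_pos.2 hm.2
    refine ⟨(x e.2 - x e.1) / (x e.2 - m), div_pos (sub_pos.2 (hm.1.trans hm.2)) hr, ?_⟩
    rw [height_eq_sub_snd (hm'.1.trans hm'.2), height_eq_sub_snd (hm'.1.trans hm'.2),
      height_eq_sub_snd (hm.1.trans hm.2), height_eq_sub_snd (hm.1.trans hm.2), ← hsnd,
      div_mul_eq_mul_div _ (x e.2 - m), eq_div_iff hr.ne']
    ring
  · have hpos := hS.height_sub_mul_pos he he' hfst hsnd hx hm hm'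
      (left_mem_Icc.2 hm.1.le) (right_mem_Icc.2 hm.1.le)
    exact ⟨_, div_pos_iff.2 (mul_pos_iff.1 hpos),
      (div_mul_cancel₀ _ (right_ne_zero_of_mul hpos.ne')).symm⟩

/-- Seen from the later of two left endpoints, an edge starting at the earlier one cannot pass
between two edges starting at the later one. -/
lemma NonCrossing.fst_lt_fst_of_height_between (hS : NonCrossing x y S) {m : ℝ}
    (hm : ∀ e ∈ S, m ∈ Ioo (x e.1) (x e.2)) (h₁ : e₁ ∈ S) (h₂ : e₂ ∈ S) (h₃ : e₃ ∈ S)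
    (hne : e₁ ≠ e₃) (hfst : e₁.1 = e₃.1) (hfst₂ : e₁.1 ≠ e₂.1)
    (hle₁ : height x y e₁ m ≤ height x y e₂ m) (hle₃ : height x y e₂ m ≤ height x y e₃ m) :
    x e₁.1 < x e₂.1 := by
  by_contra! hx
  obtain ⟨c₁, hc₁, hδ₁⟩ := hS.exists_height_sub_eq_mul h₁ h₂ hfst₂ hx (hm _ h₁) (hm _ h₂)
  obtain ⟨c₃, hc₃, hδ₃⟩ := hS.exists_height_sub_eq_mul h₃ h₂ (hfst ▸ hfst₂) (hfst ▸ hx)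
    (hm _ h₃) (hm _ h₂)
  have hδ : y e₁.1 - height x y e₂ (x e₁.1) = 0 := by
    apply le_antisymm
    · exact hδ₁ ▸ mul_nonpos_of_nonneg_of_nonpos hc₁.le (sub_nonpos.2 hle₁)
    · exact hfst ▸ hδ₃ ▸ mul_nonneg hc₃.le (sub_nonneg.2 hle₃)
  have same_snd {e : V × V} (he : e ∈ S) (hef : e.1 = e₁.1) : e.2 = e₂.2 := by
    by_contra hsnd
    have ht := left_mem_Icc.2 (hm e he).1.le
    have hpos := hS.height_sub_mul_pos he h₂ (hef ▸ hfst₂) hsnd (hef ▸ hx) (hm e he) (hm _ h₂) ht ht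
    rw [height_fst, hef, hδ, mul_zero] at hpos
    exact hpos.false
  exact hne (Prod.ext hfst ((same_snd h₁ rfl).trans (same_snd h₃ hfst.symm).symm))

lemma NonCrossing.alternationFree_fst (hS : NonCrossing x y S) {m : ℝ}
    (hm : ∀ e ∈ S, m ∈ Ioo (x e.1) (x e.2)) {n : ℕ} {s : Fin n → V × V} (hs : ∀ i, s i ∈ S)
    (hinj : Function.Injective s) (hmono : Monotone fun i => height x y (s i) m) :
    AlternationFree fun i => (s i).1 := by
  intro i j k l hij hjk hkl hik hjl
  by_contra hne
  have := hS.fst_lt_fst_of_height_between hm (hs i) (hs j) (hs k) (hinj.ne (hij.trans hjk).ne)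
    hik hne (hmono hij.le) (hmono hjk.le)
  have := hS.fst_lt_fst_of_height_between hm (hs j) (hs k) (hs l) (hinj.ne (hjk.trans hkl).ne)
    hjl (fun h => hne (hik.trans h.symm)) (hmono hjk.le) (hmono hkl.le)
  simp only [← hik] at this
  linarith

lemma NonCrossing.alternationFree_snd (hS : NonCrossing x y S) {m : ℝ}
    (hm : ∀ e ∈ S, m ∈ Ioo (x e.1) (x e.2)) {n : ℕ} {s : Fin n → V × V} (hs : ∀ i, s i ∈ S)
    (hinj : Function.Injective s) (hmono : Monotone fun i => height x y (s i) m) :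
    AlternationFree fun i => (s i).2 := by
  refine hS.reflect.image_swap.alternationFree_fst (m := -m) (s := fun i => (s i).swap) ?_
    (fun i => Finset.mem_image_of_mem _ (hs i)) (Prod.swap_injective.comp hinj) ?_
  · intro e he
    obtain ⟨f, hf, rfl⟩ := Finset.mem_image.1 he
    exact ⟨neg_lt_neg (hm f hf).2, neg_lt_neg (hm f hf).1⟩
  · have heq (i) : height (-x) y (s i).swap (-m) = height x y (s i) m :=
      height_reflect_swap ((hm _ (hs i)).1.trans (hm _ (hs i)).2).ne m
    simpa only [heq] using hmono

lemma exists_monotone_enumeration {α : Type*} {s : Finset α} {n : ℕ} (hs : s.card = n)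
    (f : α → ℝ) :
    ∃ g : Fin n → α, (∀ i, g i ∈ s) ∧ Function.Injective g ∧ Monotone fun i => f (g i) := by
  let g : Fin n → α := fun i => (s.equivFinOfCardEq hs).symm i
  exact ⟨g ∘ Tuple.sort (f ∘ g), fun i => Subtype.property _,
    (Subtype.val_injective.comp (Equiv.injective _)).comp (Equiv.injective _),
    Tuple.monotone_sort (f ∘ g)⟩

lemma NonCrossing.card_le_of_spans (hS : NonCrossing x y S) {m : ℝ}
    (hm : ∀ e ∈ S, m ∈ Ioo (x e.1) (x e.2)) {L R : Finset V} (hLR : S ⊆ L ×ˢ R) :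
    S.card ≤ 2 * L.card + 2 * R.card + 1 := by
  rcases hn : S.card with _ | n
  · omega
  obtain ⟨s, hs, hinj, hmono⟩ := exists_monotone_enumeration hn fun e => height x y e m
  have hmem (i) := Finset.mem_product.1 (hLR (hs i))
  have cover : Finset.univ ⊆ changes (fun i => (s i).1) ∪ changes fun i => (s i).2 := fun i _ => by
    have : s i.castSucc ≠ s i.succ := hinj.ne i.castSucc_lt_succ.ne
    rw [Ne, Prod.ext_iff, not_and_or] at this
    simpa [changes] using this
  have := (Finset.card_le_card cover).trans (Finset.card_union_le _ _)
  have := (hS.alternationFree_fst hm hs hinj hmono).card_changes_le fun i => (hmem i).1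
  have := (hS.alternationFree_snd hm hs hinj hmono).card_changes_le fun i => (hmem i).2
  rw [Finset.card_univ, Fintype.card_fin] at *
  omega

lemma exists_initial_segment {W : Finset V} (hx : Set.InjOn x W) {k : ℕ} (hk : k ≤ W.card) :
    ∃ L ⊆ W, L.card = k ∧ ∀ u ∈ L, ∀ v ∈ W \ L, x u < x v := by
  induction k with
  | zero => exact ⟨∅, by simp⟩
  | succ k ih =>
    obtain ⟨L, hLW, hcard, hL⟩ := ih (Nat.le_of_succ_le hk)
    have hne : (W \ L).Nonempty := by
      rw [← Finset.card_pos, Finset.card_sdiff_of_subset hLW]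
      omega
    obtain ⟨w, hw, hmin⟩ := (W \ L).exists_min_image x hne
    obtain ⟨hwW, hwL⟩ := Finset.mem_sdiff.1 hw
    refine ⟨insert w L, Finset.insert_subset hwW hLW, by rw [Finset.card_insert_of_notMem hwL,
      hcard], fun u hu v hv => ?_⟩
    simp only [Finset.mem_sdiff, Finset.mem_insert, not_or] at hu hv
    have hv' : v ∈ W \ L := Finset.mem_sdiff.2 ⟨hv.1, hv.2.2⟩
    rcases hu with rfl | hu
    · exact (hmin v hv').lt_of_ne (hx.ne hwW hv.1 (Ne.symm hv.2.1))
    · exact hL u hu v hv'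

lemma NonCrossing.card_cross_le (hS : NonCrossing x y S) {L R : Finset V}
    (hLR : ∀ u ∈ L, ∀ v ∈ R, x u < x v) :
    (S ∩ L ×ˢ R).card ≤ 2 * L.card + 2 * R.card + 1 := by
  obtain ⟨m, hmL, hmR⟩ := Order.exists_between_finsets (L.image x) (R.image x) (by
    simpa only [Finset.forall_mem_image] using hLR)
  refine (hS.mono Finset.inter_subset_left).card_le_of_spans (m := m) (fun e he => ?_)
    Finset.inter_subset_right
  have hmem := Finset.mem_product.1 (Finset.mem_inter.1 he).2
  exact ⟨hmL _ (Finset.mem_image_of_mem x hmem.1), hmR _ (Finset.mem_image_of_mem x hmem.2)⟩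

lemma card_le_card_inter_add {L W : Finset V} (hL : ∀ u ∈ L, ∀ v ∈ W \ L, x u < x v)
    (hSW : S ⊆ W ×ˢ W) (hS : ∀ e ∈ S, x e.1 < x e.2) :
    S.card ≤ (S ∩ L ×ˢ L).card + (S ∩ (W \ L) ×ˢ (W \ L)).card + (S ∩ L ×ˢ (W \ L)).card := by
  have cover : S ⊆ S ∩ L ×ˢ L ∪ S ∩ (W \ L) ×ˢ (W \ L) ∪ S ∩ L ×ˢ (W \ L) := fun e he => by
    have hW := Finset.mem_product.1 (hSW he)
    have oriented : e.1 ∉ L → e.2 ∉ L := fun h₁ h₂ =>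
      (hL _ h₂ _ (Finset.mem_sdiff.2 ⟨hW.1, h₁⟩)).not_gt (hS e he)
    simp only [Finset.mem_union, Finset.mem_inter, Finset.mem_product, Finset.mem_sdiff]
    tauto
  have := Finset.card_le_card cover
  have := Finset.card_union_le (S ∩ L ×ˢ L ∪ S ∩ (W \ L) ×ˢ (W \ L)) (S ∩ L ×ˢ (W \ L))
  have := Finset.card_union_le (S ∩ L ×ˢ L) (S ∩ (W \ L) ×ˢ (W \ L))
  omega

/-- Divide and conquer: cut the vertices at the median abscissa. -/
lemma NonCrossing.card_le_of_oriented (hS : NonCrossing x y S) {W : Finset V} (hx : Set.InjOn x W)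
    (hSW : S ⊆ W ×ˢ W) (hlt : ∀ e ∈ S, x e.1 < x e.2) :
    S.card ≤ 3 * W.card * Nat.clog 2 W.card := by
  induction hw : W.card using Nat.strong_induction_on generalizing W S with
  | _ w ih =>
  rcases le_or_gt w 1 with hw1 | hw2
  · suffices S = ∅ by simp [this]
    refine Finset.eq_empty_of_forall_notMem fun e he => (hlt e he).ne ?_
    have hmem := Finset.mem_product.1 (hSW he)
    rw [Finset.card_le_one.1 (hw.trans_le hw1) _ hmem.1 _ hmem.2]
  · obtain ⟨L, hLW, hLcard, hL⟩ := exists_initial_segment hx (k := (w + 1) / 2) (by omega)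
    have hRcard : (W \ L).card = w / 2 := by rw [Finset.card_sdiff_of_subset hLW]; omega
    have half {U : Finset V} (hU : U ⊆ W) {k : ℕ} (hk : U.card = k) (hkw : k < w) :=
      ih k hkw (hS.mono (Finset.inter_subset_left (s₂ := U ×ˢ U))) (hx.mono hU)
        Finset.inter_subset_right (fun e he => hlt e (Finset.mem_inter.1 he).1) hk
    have left := half hLW hLcard (by omega)
    have right := half Finset.sdiff_subset hRcard (by omega)
    have cross := hS.card_cross_le hL
    have hclog : Nat.clog 2 w = Nat.clog 2 ((w + 1) / 2) + 1 :=
      Nat.clog_of_two_le one_lt_two hw2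
    calc S.card
        ≤ 3 * ((w + 1) / 2) * Nat.clog 2 ((w + 1) / 2) + 3 * (w / 2) * Nat.clog 2 (w / 2)
            + (2 * L.card + 2 * (W \ L).card + 1) :=
          (card_le_card_inter_add hL hSW hlt).trans (by gcongr)
      _ ≤ 3 * ((w + 1) / 2) * Nat.clog 2 ((w + 1) / 2)
            + 3 * (w / 2) * Nat.clog 2 ((w + 1) / 2) + 3 * w := by
          gcongr
          · omega
          · omega
      _ = 3 * ((w + 1) / 2 + w / 2) * Nat.clog 2 ((w + 1) / 2) + 3 * w := by ring
      _ = 3 * w * Nat.clog 2 w := by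
          rw [hclog, show (w + 1) / 2 + w / 2 = w by omega]
          ring

open Filter Topology in
lemma Separated.eventually_perturb (h : Separated x y e e') (u : V → ℝ) :
    ∀ᶠ η : ℝ in 𝓝 0, Separated (x + η • u) y e e' := by
  obtain ⟨a, b, k, he, he'⟩ := h
  have tendsto (v : V) : Tendsto (fun η : ℝ => a * (x + η • u) v + b * y v + k) (𝓝 0)
      (𝓝 (a * x v + b * y v + k)) := by
    refine Continuous.tendsto' ?_ _ _ (by simp)
    simp only [Pi.add_apply, Pi.smul_apply, smul_eq_mul]
    fun_prop
  filter_upwards [(tendsto _).eventually_lt_const he.1, (tendsto _).eventually_lt_const he.2,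
    (tendsto _).eventually_const_lt he'.1, (tendsto _).eventually_const_lt he'.2]
    with η h₁ h₂ h₁' h₂'
  exact ⟨a, b, k, ⟨h₁, h₂⟩, h₁', h₂'⟩

open Filter Topology in
lemma eventually_injective_perturb [Finite V] {u : V → ℝ} (hu : Function.Injective u)
    (x : V → ℝ) : ∀ᶠ η : ℝ in 𝓝[≠] 0, Function.Injective (x + η • u) := by
  have finite : (Set.range fun e : V × V => (x e.2 - x e.1) / (u e.1 - u e.2)).Finite :=
    Set.finite_range _
  filter_upwards [nhdsNE_le_cofinite 0 finite.compl_mem_cofinite] with η hη i j hij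
  by_contra hne
  refine hη ⟨(i, j), (div_eq_iff (sub_ne_zero.2 (hu.ne hne))).2 ?_⟩
  simp only [Pi.add_apply, Pi.smul_apply, smul_eq_mul] at hij
  linarith

open Filter Topology in
lemma NonCrossing.exists_injective [Finite V] (hS : NonCrossing x y S) :
    ∃ x' : V → ℝ, Function.Injective x' ∧ NonCrossing x' y S := by
  obtain ⟨n, ⟨φ⟩⟩ := Finite.exists_equiv_fin V
  let u : V → ℝ := fun v => (φ v : ℕ)
  have hu : Function.Injective u := Nat.cast_injective.comp (Fin.val_injective.comp φ.injective)
  have hsep : ∀ᶠ η : ℝ in 𝓝 0, NonCrossing (x + η • u) y S := by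
    simp only [NonCrossing, Filter.eventually_all_finset, Filter.eventually_imp_distrib_left]
    exact fun e he e' he' h₁ h₂ h₃ h₄ => (hS e he e' he' h₁ h₂ h₃ h₄).eventually_perturb u
  obtain ⟨η, hinj, hη⟩ :=
    ((eventually_injective_perturb hu x).and (hsep.filter_mono nhdsWithin_le_nhds)).exists
  exact ⟨_, hinj, hη⟩

lemma NonCrossing.card_le [Finite V] (hS : NonCrossing x y S) {W : Finset V}
    (hSW : S ⊆ W ×ˢ W) (hne : ∀ e ∈ S, e.1 ≠ e.2) :
    S.card ≤ 6 * W.card * Nat.clog 2 W.card := by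
  obtain ⟨x, hx, hS⟩ := hS.exists_injective
  have right := (hS.mono (S.filter_subset fun e => x e.1 < x e.2)).card_le_of_oriented
    hx.injOn ((S.filter_subset _).trans hSW) fun e he => (Finset.mem_filter.1 he).2
  have left := (hS.reflect.mono (S.filter_subset fun e => ¬ x e.1 < x e.2)).card_le_of_oriented
    (neg_injective.comp hx).injOn ((S.filter_subset _).trans hSW) fun e he =>
      neg_lt_neg (((not_lt.1 (Finset.mem_filter.1 he).2)).lt_of_ne
        (hx.ne (hne e (Finset.mem_filter.1 he).1).symm))
  have := S.card_filter_add_card_filter_not fun e => x e.1 < x e.2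
  linarith

end Drawing

/-! ### Random subsets -/

section RandomSubset

variable {α ι : Type*} {P : Finset α} {w : α → ℝ}

/-- The probability of drawing exactly `H` when each `i ∈ P` is drawn independently with
probability `w i`. -/
def sampleWeight (P : Finset α) (w : α → ℝ) (H : Finset α) : ℝ :=
  (∏ i ∈ H, w i) * ∏ i ∈ P \ H, (1 - w i)

/-- The expectation of `F H` for a random subset `H` of `P` drawn according to `sampleWeight`. -/
def sampleMean (P : Finset α) (w : α → ℝ) (F : Finset α → ℝ) : ℝ :=
  ∑ H ∈ P.powerset, sampleWeight P w H * F H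

lemma sampleWeight_nonneg (hw : ∀ i ∈ P, w i ∈ Icc (0 : ℝ) 1) {H : Finset α} (hH : H ⊆ P) :
    0 ≤ sampleWeight P w H :=
  mul_nonneg (Finset.prod_nonneg fun i hi => (hw i (hH hi)).1)
    (Finset.prod_nonneg fun i hi => sub_nonneg.2 (hw i (Finset.sdiff_subset hi)).2)

lemma sampleWeight_mul_indicator {A B : Finset α} (hA : A ⊆ P) {H : Finset α} :
    sampleWeight P w H * (if A ⊆ H ∧ Disjoint H B then 1 else 0) =
      (∏ i ∈ H, if i ∈ B then 0 else w i) * ∏ i ∈ P \ H, if i ∈ A then 0 else 1 - w i := by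
  split_ifs with h
  · rw [mul_one, sampleWeight]
    congr 1 <;> refine Finset.prod_congr rfl fun i hi => ?_
    · rw [if_neg (Finset.disjoint_left.1 h.2 hi)]
    · rw [if_neg fun hiA => (Finset.mem_sdiff.1 hi).2 (h.1 hiA)]
  · rw [mul_zero, eq_comm, mul_eq_zero]
    rcases not_and_or.1 h with hAH | hHB
    · obtain ⟨i, hi, hiH⟩ := Finset.not_subset.1 hAH
      exact .inr (Finset.prod_eq_zero (Finset.mem_sdiff.2 ⟨hA hi, hiH⟩) (if_pos hi))
    · obtain ⟨i, hi, hiB⟩ := Finset.not_disjoint_iff.1 hHB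
      exact .inl (Finset.prod_eq_zero hi (if_pos hiB))

lemma sampleMean_subset_and_disjoint (w : α → ℝ) {A B : Finset α} (hA : A ⊆ P) (hB : B ⊆ P)
    (hAB : Disjoint A B) :
    sampleMean P w (fun H => if A ⊆ H ∧ Disjoint H B then 1 else 0) =
      (∏ i ∈ A, w i) * ∏ i ∈ B, (1 - w i) := by
  simp only [sampleMean, sampleWeight_mul_indicator hA]
  rw [← Finset.prod_add]
  have factor : ∀ i ∈ P, ((if i ∈ B then 0 else w i) + if i ∈ A then 0 else 1 - w i) =
      (if i ∈ A then w i else 1) * if i ∈ B then 1 - w i else 1 := by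
    intro i _
    by_cases hiA : i ∈ A
    · simp [hiA, Finset.disjoint_left.1 hAB hiA]
    · by_cases hiB : i ∈ B <;> simp [hiA, hiB]
  rw [Finset.prod_congr rfl factor, Finset.prod_mul_distrib, Finset.prod_ite_mem,
    Finset.prod_ite_mem, Finset.inter_eq_right.2 hA, Finset.inter_eq_right.2 hB]

lemma sum_sampleWeight (P : Finset α) (w : α → ℝ) : ∑ H ∈ P.powerset, sampleWeight P w H = 1 := by
  simpa [sampleMean] using sampleMean_subset_and_disjoint (P := P) w (Finset.empty_subset _)
    (Finset.empty_subset _) (Finset.disjoint_empty_left _)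

lemma sampleMean_const_mul (P : Finset α) (w : α → ℝ) (a : ℝ) (F : Finset α → ℝ) :
    sampleMean P w (fun H => a * F H) = a * sampleMean P w F := by
  simp only [sampleMean, Finset.mul_sum, mul_left_comm]

lemma sampleMean_add (P : Finset α) (w : α → ℝ) (F G : Finset α → ℝ) :
    sampleMean P w (fun H => F H + G H) = sampleMean P w F + sampleMean P w G := by
  simp only [sampleMean, mul_add, Finset.sum_add_distrib]

lemma sampleMean_sum (P : Finset α) (w : α → ℝ) (s : Finset ι) (F : ι → Finset α → ℝ) :
    sampleMean P w (fun H => ∑ i ∈ s, F i H) = ∑ i ∈ s, sampleMean P w (F i) := by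
  simp only [sampleMean, Finset.mul_sum]
  exact Finset.sum_comm

lemma sampleMean_mono (hw : ∀ i ∈ P, w i ∈ Icc (0 : ℝ) 1) {F G : Finset α → ℝ}
    (hFG : ∀ H ⊆ P, F H ≤ G H) : sampleMean P w F ≤ sampleMean P w G :=
  Finset.sum_le_sum fun H hH => mul_le_mul_of_nonneg_left (hFG H (Finset.mem_powerset.1 hH))
    (sampleWeight_nonneg hw (Finset.mem_powerset.1 hH))

lemma sampleMean_card (P : Finset α) (w : α → ℝ) :
    sampleMean P w (fun H => (H.card : ℝ)) = ∑ i ∈ P, w i := by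
  have card_eq : ∀ H ∈ P.powerset, (H.card : ℝ) =
      ∑ i ∈ P, if {i} ⊆ H ∧ Disjoint H ∅ then 1 else 0 := fun H hH => by
    simp [Finset.inter_eq_right.2 (Finset.mem_powerset.1 hH)]
  calc sampleMean P w (fun H => (H.card : ℝ))
      = sampleMean P w (fun H => ∑ i ∈ P, if {i} ⊆ H ∧ Disjoint H ∅ then 1 else 0) :=
        Finset.sum_congr rfl fun H hH => congrArg (sampleWeight P w H * ·) (card_eq H hH)
    _ = ∑ i ∈ P, w i := by
        rw [sampleMean_sum]
        refine Finset.sum_congr rfl fun i hi => ?_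
        rw [sampleMean_subset_and_disjoint w (Finset.singleton_subset_iff.2 hi)
          (Finset.empty_subset _) (Finset.disjoint_empty_right _)]
        simp

lemma exists_le_sampleMean (hw : ∀ i ∈ P, w i ∈ Icc (0 : ℝ) 1) (F : Finset α → ℝ) :
    ∃ H ⊆ P, F H ≤ sampleMean P w F := by
  have total := sum_sampleWeight P w
  obtain ⟨H, hH, hle⟩ := (concaveOn_id (𝕜 := ℝ) convex_univ).exists_le_of_centerMass
    (fun H hH => sampleWeight_nonneg hw (Finset.mem_powerset.1 hH)) (total ▸ one_pos)
    (p := F) fun H _ => mem_univ _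
  rw [Finset.centerMass_eq_of_sum_1 _ _ total] at hle
  exact ⟨H, Finset.mem_powerset.1 hH, hle⟩

lemma exists_subset_card_le_and_not_disjoint (hw : ∀ i ∈ P, w i ∈ Icc (0 : ℝ) 1) {μ : ℝ}
    (hμ : 0 < μ) (hsum : ∑ i ∈ P, w i ≤ μ) {s : Finset ι} {B : ι → Finset α}
    (hB : ∀ i ∈ s, B i ⊆ P) (hmiss : ∑ i ∈ s, ∏ a ∈ B i, (1 - w a) < 1 / 2) :
    ∃ H ⊆ P, (H.card : ℝ) ≤ 2 * μ ∧ ∀ i ∈ s, ¬ Disjoint H (B i) := by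
  let missed (H : Finset α) : ℝ := ∑ i ∈ s, if ∅ ⊆ H ∧ Disjoint H (B i) then 1 else 0
  obtain ⟨H, hHP, hH⟩ := exists_le_sampleMean hw fun H => (2 * μ)⁻¹ * H.card + missed H
  have mean_missed : sampleMean P w missed = ∑ i ∈ s, ∏ a ∈ B i, (1 - w a) := by
    rw [sampleMean_sum]
    refine Finset.sum_congr rfl fun i hi => ?_
    rw [sampleMean_subset_and_disjoint w (Finset.empty_subset _) (hB i hi)
      (Finset.disjoint_empty_left _), Finset.prod_empty, one_mul]
  have mean_card : (2 * μ)⁻¹ * ∑ i ∈ P, w i ≤ 1 / 2 := by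
    rw [inv_mul_le_iff₀ (by positivity)]
    linarith
  have total : (2 * μ)⁻¹ * H.card + missed H < 1 := by
    rw [sampleMean_add, sampleMean_const_mul, sampleMean_card, mean_missed] at hH
    linarith
  have missed_nonneg : 0 ≤ missed H := Finset.sum_nonneg fun i _ => by positivity
  have card_nonneg : 0 ≤ (2 * μ)⁻¹ * H.card := by positivity
  refine ⟨H, hHP, ?_, fun i hi hdisj => ?_⟩
  · have : (2 * μ)⁻¹ * H.card ≤ 1 := by linarith
    rwa [inv_mul_le_iff₀ (by positivity), mul_one] at this
  · have : (1 : ℝ) ≤ missed H := by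
      refine le_of_eq_of_le ?_ (Finset.single_le_sum (fun i _ => ?_) hi)
      · rw [if_pos ⟨Finset.empty_subset _, hdisj⟩]
      · positivity
    linarith

end RandomSubset

/-! ### Shallow pairs -/

section ShallowPairs

lemma separated_of_dist_lt_dist {V : Type*} {c : V → Plane} {e e' : V × V} {p q : Plane}
    (h₁ : dist (c e.1) p < dist (c e.1) q) (h₂ : dist (c e.2) p < dist (c e.2) q)
    (h₁' : dist (c e'.1) q < dist (c e'.1) p) (h₂' : dist (c e'.2) q < dist (c e'.2) p) :
    Separated (fun i => c i 0) (fun i => c i 1) e e' := by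
  simp only [dist_lt_dist_iff_inner, PiLp.inner_apply, Fin.sum_univ_two, RCLike.inner_apply,
    conj_trivial, PiLp.sub_apply] at h₁ h₂ h₁' h₂'
  refine ⟨2 * (q 0 - p 0), 2 * (q 1 - p 1), ‖p‖ ^ 2 - ‖q‖ ^ 2, ⟨?_, ?_⟩, ?_, ?_⟩ <;> linarith

variable {V : Type*} [Fintype V]

/-- The ordered pairs of distinct elements of a common member of `𝒜` of size at most `k`. -/
def shallowPairs (𝒜 : Finset (Finset V)) (k : ℕ) : Finset (V × V) :=
  {e | e.1 ≠ e.2 ∧ ∃ Q ∈ 𝒜, e.1 ∈ Q ∧ e.2 ∈ Q ∧ Q.card ≤ k}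

/-- The ordered pairs of distinct elements that make up the trace of a member of `𝒜` on `R`. -/
def isolatedPairs (𝒜 : Finset (Finset V)) (R : Finset V) : Finset (V × V) :=
  {e | e.1 ≠ e.2 ∧ ∃ Q ∈ 𝒜, Q ∩ R = {e.1, e.2}}

variable {𝒜 : Finset (Finset V)} {k : ℕ} {R : Finset V} {e : V × V}

lemma mem_shallowPairs :
    e ∈ shallowPairs 𝒜 k ↔ e.1 ≠ e.2 ∧ ∃ Q ∈ 𝒜, e.1 ∈ Q ∧ e.2 ∈ Q ∧ Q.card ≤ k := by
  simp [shallowPairs]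

lemma mem_isolatedPairs :
    e ∈ isolatedPairs 𝒜 R ↔ e.1 ≠ e.2 ∧ ∃ Q ∈ 𝒜, Q ∩ R = {e.1, e.2} := by
  simp [isolatedPairs]

lemma shallowPairs_zero (𝒜 : Finset (Finset V)) : shallowPairs 𝒜 0 = ∅ := by
  refine Finset.eq_empty_of_forall_notMem fun e he => ?_
  obtain ⟨-, Q, -, heQ, -, hcard⟩ := mem_shallowPairs.1 he
  exact Finset.card_ne_zero_of_mem heQ (Nat.le_zero.1 hcard)

lemma isolatedPairs_subset_product (𝒜 : Finset (Finset V)) (R : Finset V) :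
    isolatedPairs 𝒜 R ⊆ R ×ˢ R := fun e he => by
  obtain ⟨-, Q, -, hQ⟩ := mem_isolatedPairs.1 he
  have hR : {e.1, e.2} ⊆ R := hQ ▸ Finset.inter_subset_right
  exact Finset.mem_product.2 ⟨hR (by simp), hR (by simp)⟩

/-- The Clarkson–Shor argument: a shallow pair is isolated in a sample with substantial
probability. -/
lemma card_shallowPairs_mul_le_sampleMean (𝒜 : Finset (Finset V)) (k : ℕ) {q : ℝ}
    (hq : q ∈ Icc (0 : ℝ) 1) :
    (shallowPairs 𝒜 k).card * (q ^ 2 * (1 - k * q)) ≤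
      sampleMean Finset.univ (fun _ => q) fun R => ((isolatedPairs 𝒜 R).card : ℝ) := by
  choose! Q hQ𝒜 hQ₁ hQ₂ hQk using fun e (he : e ∈ shallowPairs 𝒜 k) => (mem_shallowPairs.1 he).2
  let rest (e : V × V) : Finset V := Q e \ {e.1, e.2}
  let isolated (e : V × V) (R : Finset V) : ℝ :=
    if {e.1, e.2} ⊆ R ∧ Disjoint R (rest e) then 1 else 0
  have mean_isolated : ∀ e ∈ shallowPairs 𝒜 k, q ^ 2 * (1 - k * q) ≤
      sampleMean Finset.univ (fun _ => q) (isolated e) := fun e he => by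
    rw [sampleMean_subset_and_disjoint _ (Finset.subset_univ _) (Finset.subset_univ _)
      Finset.disjoint_sdiff, Finset.prod_const, Finset.prod_const,
      Finset.card_pair (mem_shallowPairs.1 he).1]
    gcongr
    have rest_card : ((rest e).card : ℝ) ≤ k :=
      mod_cast (Finset.card_le_card Finset.sdiff_subset).trans (hQk e he)
    have bernoulli := one_add_mul_le_pow (a := -q) (by linarith [hq.2]) (rest e).card
    have := mul_le_mul_of_nonneg_right rest_card hq.1
    rw [← sub_eq_add_neg] at bernoulli
    linarith
  have sum_isolated (R : Finset V) : ∑ e ∈ shallowPairs 𝒜 k, isolated e R ≤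
      (isolatedPairs 𝒜 R).card := by
    rw [Finset.sum_boole]
    refine mod_cast Finset.card_le_card fun e he => ?_
    obtain ⟨he, hR, hdisj⟩ := Finset.mem_filter.1 he
    refine mem_isolatedPairs.2 ⟨(mem_shallowPairs.1 he).1, Q e, hQ𝒜 e he, ?_⟩
    have hpair : {e.1, e.2} ⊆ Q e := by
      simp [Finset.insert_subset_iff, hQ₁ e he, hQ₂ e he]
    rw [← Finset.sdiff_union_of_subset hpair, Finset.union_inter_distrib_right,
      Finset.disjoint_iff_inter_eq_empty.1 hdisj.symm, Finset.inter_eq_left.2 hR,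
      Finset.empty_union]
  calc ((shallowPairs 𝒜 k).card : ℝ) * (q ^ 2 * (1 - k * q))
      = ∑ _e ∈ shallowPairs 𝒜 k, q ^ 2 * (1 - k * q) := by rw [Finset.sum_const, nsmul_eq_mul]
    _ ≤ ∑ e ∈ shallowPairs 𝒜 k, sampleMean Finset.univ (fun _ => q) (isolated e) :=
        Finset.sum_le_sum mean_isolated
    _ ≤ _ := by
        rw [← sampleMean_sum]
        exact sampleMean_mono (fun _ _ => hq) fun R _ => sum_isolated R

variable {B : V → Set Plane} {c : V → Plane}

/-- The centres of `e` are nearer to the witness of `e` than to that of `e'`, and conversely, so the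
bisector of the two witnesses separates them. -/
lemma nonCrossing_isolatedPairs (hB : ∀ i, IsRadial (c i) (B i)) (R : Finset V) :
    NonCrossing (fun i => c i 0) (fun i => c i 1) (isolatedPairs (coverings B) R) := by
  intro e he e' he' h₁₁ h₁₂ h₂₁ h₂₂
  obtain ⟨-, _, hP, hp⟩ := mem_isolatedPairs.1 he
  obtain ⟨-, _, hQ, hq⟩ := mem_isolatedPairs.1 he'
  obtain ⟨p, rfl⟩ := mem_coverings.1 hP
  obtain ⟨q, rfl⟩ := mem_coverings.1 hQ
  have nearer {i : V} {p q : Plane} {s t : Finset V} (hs : covering B p ∩ R = s)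
      (ht : covering B q ∩ R = t) (his : i ∈ s) (hit : i ∉ t) : dist (c i) p < dist (c i) q := by
    subst hs ht
    simp only [Finset.mem_inter, mem_covering, not_and'] at his hit
    exact hB i p his.1 q (hit his.2)
  exact separated_of_dist_lt_dist
    (nearer hp hq (by simp) (by simp [h₁₁, h₁₂])) (nearer hp hq (by simp) (by simp [h₂₁, h₂₂]))
    (nearer hq hp (by simp) (by simp [h₁₁.symm, h₂₁.symm]))
    (nearer hq hp (by simp) (by simp [h₁₂.symm, h₂₂.symm]))

lemma card_isolatedPairs_le (hB : ∀ i, IsRadial (c i) (B i)) (R : Finset V) :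
    (isolatedPairs (coverings B) R).card ≤ 6 * R.card * Nat.clog 2 R.card :=
  (nonCrossing_isolatedPairs hB R).card_le (isolatedPairs_subset_product (coverings B) R)
    fun _ he => (mem_isolatedPairs.1 he).1

lemma sampleMean_card_isolatedPairs_le (hB : ∀ i, IsRadial (c i) (B i)) {q : ℝ}
    (hq : q ∈ Icc (0 : ℝ) 1) :
    sampleMean Finset.univ (fun _ => q) (fun R => ((isolatedPairs (coverings B) R).card : ℝ)) ≤
      6 * Nat.clog 2 (Fintype.card V) * (Fintype.card V * q) := by
  calc sampleMean Finset.univ (fun _ => q) (fun R => ((isolatedPairs (coverings B) R).card : ℝ))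
      ≤ sampleMean Finset.univ (fun _ => q) fun R =>
          6 * Nat.clog 2 (Fintype.card V) * (R.card : ℝ) := by
        refine sampleMean_mono (fun _ _ => hq) fun R _ => ?_
        have hR := card_isolatedPairs_le hB R
        have hclog := Nat.clog_mono_right 2 R.card_le_univ
        exact_mod_cast (hR.trans (Nat.mul_le_mul_left _ hclog)).trans_eq (mul_right_comm _ _ _)
    _ = 6 * Nat.clog 2 (Fintype.card V) * (Fintype.card V * q) := by
        rw [sampleMean_const_mul, sampleMean_card, Finset.sum_const, nsmul_eq_mul,
          Finset.card_univ]

lemma clog_two_le_two_mul_one_add_log (n : ℕ) : (Nat.clog 2 n : ℝ) ≤ 2 * (1 + Real.log n) := by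
  have hlog : 0 ≤ Real.log n := Real.log_natCast_nonneg n
  have hlogb : Real.logb 2 n ≤ 2 * Real.log n := by
    rw [Real.logb, div_le_iff₀ (Real.log_pos one_lt_two)]
    nlinarith [Real.log_two_gt_d9]
  have hceil := Nat.ceil_lt_add_one (div_nonneg hlog (Real.log_pos one_lt_two).le)
  rw [← Nat.cast_two, Real.log_div_log, Real.natCeil_logb_natCast] at hceil
  push_cast at hceil
  linarith

lemma card_shallowPairs_le (hB : ∀ i, IsRadial (c i) (B i)) (k : ℕ) :
    ((shallowPairs (coverings B) k).card : ℝ) ≤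
      48 * Fintype.card V * (1 + Real.log (Fintype.card V)) * k := by
  rcases k.eq_zero_or_pos with rfl | hk
  · simp [shallowPairs_zero]
  have hk1 : (1 : ℝ) ≤ k := mod_cast hk
  have hq : (2 * k : ℝ)⁻¹ ∈ Icc (0 : ℝ) 1 := ⟨by positivity, inv_le_one_of_one_le₀ (by linarith)⟩
  have sample := (card_shallowPairs_mul_le_sampleMean (coverings B) k hq).trans
    (sampleMean_card_isolatedPairs_le hB hq)
  have half : (1 : ℝ) - k * (2 * (k : ℝ))⁻¹ = 1 / 2 := by field_simp; norm_num
  rw [half] at sample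
  calc ((shallowPairs (coverings B) k).card : ℝ)
      = 8 * k ^ 2 * ((shallowPairs (coverings B) k).card * ((2 * k : ℝ)⁻¹ ^ 2 * (1 / 2))) := by
        field_simp; norm_num
    _ ≤ 8 * k ^ 2 * (6 * Nat.clog 2 (Fintype.card V) * (Fintype.card V * (2 * k : ℝ)⁻¹)) := by
        gcongr
    _ = 24 * Fintype.card V * Nat.clog 2 (Fintype.card V) * k := by field_simp; ring
    _ ≤ 24 * Fintype.card V * (2 * (1 + Real.log (Fintype.card V))) * k := by
        gcongr
        exact clog_two_le_two_mul_one_add_log _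
    _ = 48 * Fintype.card V * (1 + Real.log (Fintype.card V)) * k := by ring

end ShallowPairs

/-! ### Random pairs meeting all large rectangles -/

section Rectangles

variable {V : Type*}

lemma sum_inv_le_mul_harmonic {α : Type*} {P : Finset α} {κ : α → ℕ} {M : ℝ}
    (hpos : ∀ a ∈ P, 0 < κ a) (hM : ∀ k : ℕ, ((P.filter (κ · ≤ k)).card : ℝ) ≤ M * k) (n : ℕ) :
    ∑ a ∈ P.filter (κ · ≤ n), (κ a : ℝ)⁻¹ ≤ M * harmonic n := by
  let N (k : ℕ) : ℝ := (P.filter (κ · ≤ k)).card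
  suffices ∑ a ∈ P.filter (κ · ≤ n), (κ a : ℝ)⁻¹ + (M * n - N n) / (n + 1) ≤ M * harmonic n by
    have : 0 ≤ (M * n - N n) / (n + 1) := div_nonneg (sub_nonneg.2 (hM n)) (by positivity)
    linarith
  induction n with
  | zero =>
    have : P.filter (κ · = 0) = ∅ := Finset.filter_eq_empty_iff.2 fun a ha => (hpos a ha).ne'
    simp [N, this]
  | succ n ih =>
    have split : P.filter (κ · ≤ n + 1) = P.filter (κ · ≤ n) ∪ P.filter (κ · = n + 1) := by
      rw [← Finset.filter_or]
      simp only [Nat.le_succ_iff]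
    have disj : Disjoint (P.filter (κ · ≤ n)) (P.filter (κ · = n + 1)) :=
      Finset.disjoint_filter.2 fun a _ h => (Nat.lt_succ_of_le h).ne
    have card_new : ((P.filter (κ · = n + 1)).card : ℝ) = N (n + 1) - N n := by
      simp only [N, split, Finset.card_union_of_disjoint disj, Nat.cast_add, add_sub_cancel_left]
    have sum_new : ∑ a ∈ P.filter (κ · = n + 1), (κ a : ℝ)⁻¹ = (N (n + 1) - N n) / (n + 1) := by
      rw [Finset.sum_congr rfl fun a ha => by rw [(Finset.mem_filter.1 ha).2], Finset.sum_const,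
        nsmul_eq_mul, card_new, Nat.cast_succ, div_eq_mul_inv]
    have gap : (M * (n + 1 : ℕ) - N (n + 1)) / ((n + 1 : ℕ) + 1) ≤
        (M * (n + 1 : ℕ) - N (n + 1)) / (n + 1) :=
      div_le_div_of_nonneg_left (sub_nonneg.2 (hM _)) (by positivity) (by push_cast; linarith)
    rw [split, Finset.sum_union disj, sum_new, harmonic_succ]
    push_cast at gap ⊢
    have : (N (n + 1) - N n) / (n + 1) + (M * (n + 1) - N (n + 1)) / (n + 1) =
        (M * n - N n) / (n + 1) + M * (n + 1 : ℝ)⁻¹ := by ring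
    linarith

/-- The pairs of distinct elements in the rectangle `S ×ˢ T`. -/
def offDiagProduct (S T : Finset V) : Finset (V × V) := {e ∈ S ×ˢ T | e.1 ≠ e.2}

lemma sq_div_two_le_card_offDiagProduct {S T : Finset V} {a : ℝ} (ha : 2 ≤ a) (hS : a ≤ S.card)
    (hT : a ≤ T.card) : a ^ 2 / 2 ≤ (offDiagProduct S T).card := by
  have diagonal : ((S ×ˢ T).filter fun e => ¬ e.1 ≠ e.2).card ≤ S.card := by
    refine Finset.card_le_card_of_injOn Prod.fst
      (fun e he => (Finset.mem_product.1 (Finset.mem_filter.1 he).1).1) fun e he e' he' h => ?_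
    simp only [Finset.coe_filter, mem_ofPred_eq, not_not] at he he'
    exact Prod.ext h (he.2 ▸ he'.2 ▸ h)
  have total := Finset.card_filter_add_card_filter_not (s := S ×ˢ T) fun e => e.1 ≠ e.2
  rw [Finset.card_product] at total
  have : (S.card * T.card : ℝ) ≤ (offDiagProduct S T).card + S.card := by
    exact_mod_cast total.symm.le.trans (Nat.add_le_add_left diagonal _)
  have := mul_le_mul hS (sub_le_sub_right hT 1) (by linarith) (by linarith)
  nlinarith

/-- The pairs of subsets of `Q` both of which contain at least a fraction `δ` of `Q`. -/
def largePairs (δ : ℝ) (Q : Finset V) : Finset (Finset V × Finset V) :=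
  {r ∈ Q.powerset ×ˢ Q.powerset | δ * Q.card ≤ r.1.card ∧ δ * Q.card ≤ r.2.card}

lemma mem_largePairs {δ : ℝ} {Q : Finset V} {r : Finset V × Finset V} :
    r ∈ largePairs δ Q ↔
      (r.1 ⊆ Q ∧ r.2 ⊆ Q) ∧ δ * Q.card ≤ r.1.card ∧ δ * Q.card ≤ r.2.card := by
  simp [largePairs]

variable [Fintype V] {𝒜 : Finset (Finset V)} {e : V × V} {Q S T : Finset V}

/-- The size of the smallest member of `𝒜` containing both entries of `e` (and `0` if `e` is
contained in no member of `𝒜` or lies on the diagonal). -/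
def pairDepth (𝒜 : Finset (Finset V)) (e : V × V) : ℕ := sInf {k | e ∈ shallowPairs 𝒜 k}

lemma shallowPairs_mono (𝒜 : Finset (Finset V)) : Monotone (shallowPairs 𝒜) := by
  intro k l hkl e he
  obtain ⟨hne, Q, hQ, h₁, h₂, hcard⟩ := mem_shallowPairs.1 he
  exact mem_shallowPairs.2 ⟨hne, Q, hQ, h₁, h₂, hcard.trans hkl⟩

lemma shallowPairs_subset_card {k : ℕ} :
    shallowPairs 𝒜 k ⊆ shallowPairs 𝒜 (Fintype.card V) := fun e he => by
  obtain ⟨hne, Q, hQ, h₁, h₂, -⟩ := mem_shallowPairs.1 he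
  exact mem_shallowPairs.2 ⟨hne, Q, hQ, h₁, h₂, Finset.card_le_univ Q⟩

lemma pairDepth_le {k : ℕ} (he : e ∈ shallowPairs 𝒜 k) : pairDepth 𝒜 e ≤ k := Nat.sInf_le he

lemma mem_shallowPairs_pairDepth {k : ℕ} (he : e ∈ shallowPairs 𝒜 k) :
    e ∈ shallowPairs 𝒜 (pairDepth 𝒜 e) :=
  Nat.sInf_mem (s := {k | e ∈ shallowPairs 𝒜 k}) ⟨k, he⟩

lemma pairDepth_pos {k : ℕ} (he : e ∈ shallowPairs 𝒜 k) : 0 < pairDepth 𝒜 e := by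
  refine Nat.pos_of_ne_zero fun h => ?_
  have := mem_shallowPairs_pairDepth he
  rw [h, shallowPairs_zero] at this
  exact Finset.notMem_empty e this

lemma sum_inv_pairDepth_le {M : ℝ} (hM : ∀ k : ℕ, ((shallowPairs 𝒜 k).card : ℝ) ≤ M * k)
    (hM0 : 0 ≤ M) (n : ℕ) :
    ∑ e ∈ shallowPairs 𝒜 n, (pairDepth 𝒜 e : ℝ)⁻¹ ≤ M * (1 + Real.log n) := by
  have shallow (k : ℕ) :
      (shallowPairs 𝒜 n).filter (pairDepth 𝒜 · ≤ k) ⊆ shallowPairs 𝒜 k := fun e he => by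
    obtain ⟨he, hk⟩ := Finset.mem_filter.1 he
    exact shallowPairs_mono 𝒜 hk (mem_shallowPairs_pairDepth he)
  have := sum_inv_le_mul_harmonic (fun e he => pairDepth_pos he)
    (fun k => (Nat.cast_le.2 (Finset.card_le_card (shallow k))).trans (hM k)) n
  rw [Finset.filter_true_of_mem fun e he => pairDepth_le he] at this
  exact this.trans (mul_le_mul_of_nonneg_left (harmonic_le_one_add_log n) hM0)

lemma offDiagProduct_subset_shallowPairs (hQ : Q ∈ 𝒜) (hS : S ⊆ Q) (hT : T ⊆ Q) {k : ℕ}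
    (hk : Q.card ≤ k) : offDiagProduct S T ⊆ shallowPairs 𝒜 k := fun e he => by
  obtain ⟨he, hne⟩ := Finset.mem_filter.1 he
  obtain ⟨h₁, h₂⟩ := Finset.mem_product.1 he
  exact mem_shallowPairs.2 ⟨hne, Q, hQ, hS h₁, hT h₂, hk⟩

/-- The probability `min 1 (X / pairDepth 𝒜 e)` with which the pair `e` is selected. -/
def pairWeight (𝒜 : Finset (Finset V)) (X : ℝ) (e : V × V) : ℝ := min 1 (X / pairDepth 𝒜 e)

lemma pairWeight_mem_Icc {X : ℝ} (hX : 0 ≤ X) (e : V × V) :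
    pairWeight 𝒜 X e ∈ Icc (0 : ℝ) 1 :=
  ⟨le_min zero_le_one (by positivity), min_le_left _ _⟩

lemma one_sub_pairWeight_le_exp {X : ℝ} (hX : 0 ≤ X) {k : ℕ} (he : e ∈ shallowPairs 𝒜 k) :
    1 - pairWeight 𝒜 X e ≤ Real.exp (-(X / k)) := by
  rcases le_total 1 (X / pairDepth 𝒜 e) with h | h
  · rw [pairWeight, min_eq_left h, sub_self]
    positivity
  · rw [pairWeight, min_eq_right h]
    have : X / k ≤ X / pairDepth 𝒜 e :=
      div_le_div_of_nonneg_left hX (mod_cast pairDepth_pos he) (mod_cast pairDepth_le he)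
    linarith [Real.add_one_le_exp (-(X / k))]

lemma prod_one_sub_pairWeight_le {X : ℝ} (hX : 0 ≤ X) (hQ : Q ∈ 𝒜) (hS : S ⊆ Q) (hT : T ⊆ Q) :
    ∏ e ∈ offDiagProduct S T, (1 - pairWeight 𝒜 X e) ≤
      Real.exp (-(X / Q.card * (offDiagProduct S T).card)) := by
  calc ∏ e ∈ offDiagProduct S T, (1 - pairWeight 𝒜 X e)
      ≤ ∏ _e ∈ offDiagProduct S T, Real.exp (-(X / Q.card)) :=
        Finset.prod_le_prod (fun e _ => sub_nonneg.2 (pairWeight_mem_Icc hX e).2) fun e he =>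
          one_sub_pairWeight_le_exp hX (offDiagProduct_subset_shallowPairs hQ hS hT le_rfl he)
    _ = Real.exp (-(X / Q.card * (offDiagProduct S T).card)) := by
        rw [Finset.prod_const, ← Real.exp_nat_mul]
        ring_nf

lemma four_pow_mul_exp_le (n : ℕ) : 4 ^ n * Real.exp (-(3 * n)) ≤ Real.exp (-n) := by
  have four_le : (4 : ℝ) ≤ Real.exp 2 := by
    rw [show (2 : ℝ) = 1 + 1 by norm_num, Real.exp_add]
    nlinarith [Real.add_one_le_exp 1]
  calc 4 ^ n * Real.exp (-(3 * n)) ≤ Real.exp 2 ^ n * Real.exp (-(3 * n)) := by gcongr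
    _ = Real.exp (-n) := by
        rw [← Real.exp_nat_mul, ← Real.exp_add]
        ring_nf

/-- The weight `6 / δ ^ 2` makes a given rectangle be missed with probability at most
`exp (-3 * |Q|)`, which beats the at most `4 ^ |Q|` rectangles in `Q`. -/
lemma sum_prod_largePairs_le {δ : ℝ} (hδ : 0 < δ) (hQ : Q ∈ 𝒜) (hδQ : 2 ≤ δ * Q.card) :
    ∑ r ∈ largePairs δ Q, ∏ e ∈ offDiagProduct r.1 r.2, (1 - pairWeight 𝒜 (6 / δ ^ 2) e) ≤
      Real.exp (-Q.card) := by
  have hcard : (0 : ℝ) < Q.card := pos_of_mul_pos_right (two_pos.trans_le hδQ) hδ.le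
  have missed : ∀ r ∈ largePairs δ Q,
      ∏ e ∈ offDiagProduct r.1 r.2, (1 - pairWeight 𝒜 (6 / δ ^ 2) e) ≤
        Real.exp (-(3 * Q.card)) := fun r hr => by
    obtain ⟨⟨hS, hT⟩, hScard, hTcard⟩ := mem_largePairs.1 hr
    refine (prod_one_sub_pairWeight_le (by positivity) hQ hS hT).trans
      (Real.exp_le_exp.2 (neg_le_neg ?_))
    calc (3 * Q.card : ℝ) = 6 / δ ^ 2 / Q.card * ((δ * Q.card) ^ 2 / 2) := by field_simp; norm_num
      _ ≤ 6 / δ ^ 2 / Q.card * (offDiagProduct r.1 r.2).card := by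
          gcongr
          exact sq_div_two_le_card_offDiagProduct hδQ hScard hTcard
  have card_le : ((largePairs δ Q).card : ℝ) ≤ 4 ^ Q.card := by
    have := Finset.card_filter_le (Q.powerset ×ˢ Q.powerset) fun r =>
      δ * Q.card ≤ r.1.card ∧ δ * Q.card ≤ r.2.card
    rw [Finset.card_product, Finset.card_powerset, ← mul_pow] at this
    exact_mod_cast this
  calc _ ≤ (largePairs δ Q).card * Real.exp (-(3 * Q.card)) := by
        simpa only [nsmul_eq_mul] using Finset.sum_le_card_nsmul _ _ _ missed
    _ ≤ 4 ^ Q.card * Real.exp (-(3 * Q.card)) := by gcongr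
    _ ≤ Real.exp (-Q.card) := four_pow_mul_exp_le _

lemma exists_subset_shallowPairs_meeting_largePairs {δ K : ℝ} (hδ : 0 < δ) (hK : 0 < K) {m : ℕ}
    (hsum : ∑ e ∈ shallowPairs 𝒜 (Fintype.card V), (pairDepth 𝒜 e : ℝ)⁻¹ ≤ K)
    (hm : 2 ≤ δ * m) (hcard : 𝒜.card * Real.exp (-m) < 1 / 2) :
    ∃ H ⊆ shallowPairs 𝒜 (Fintype.card V), (H.card : ℝ) ≤ 12 / δ ^ 2 * K ∧
      ∀ Q ∈ 𝒜, m < Q.card → ∀ r ∈ largePairs δ Q, ¬ Disjoint H (offDiagProduct r.1 r.2) := by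
  let deep := 𝒜.filter (m < ·.card)
  have hdeep {Q : Finset V} (hQ : Q ∈ deep) : Q ∈ 𝒜 ∧ (m : ℝ) ≤ Q.card :=
    (Finset.mem_filter.1 hQ).imp_right fun h => mod_cast h.le
  have hX : 0 ≤ 6 / δ ^ 2 := by positivity
  have sum_weight : ∑ e ∈ shallowPairs 𝒜 (Fintype.card V), pairWeight 𝒜 (6 / δ ^ 2) e ≤
      6 / δ ^ 2 * K := by
    refine (Finset.sum_le_sum fun e _ => (min_le_right _ _).trans_eq (div_eq_mul_inv _ _)).trans ?_
    rw [← Finset.mul_sum]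
    gcongr
  have missed : ∑ r ∈ deep.sigma (largePairs δ),
      ∏ e ∈ offDiagProduct r.2.1 r.2.2, (1 - pairWeight 𝒜 (6 / δ ^ 2) e) < 1 / 2 := by
    rw [Finset.sum_sigma]
    calc _ ≤ ∑ _Q ∈ deep, Real.exp (-m) := Finset.sum_le_sum fun Q hQ =>
          (sum_prod_largePairs_le hδ (hdeep hQ).1 (hm.trans
            (mul_le_mul_of_nonneg_left (hdeep hQ).2 hδ.le))).trans
            (Real.exp_le_exp.2 (neg_le_neg (hdeep hQ).2))
      _ ≤ 𝒜.card * Real.exp (-m) := by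
          rw [Finset.sum_const, nsmul_eq_mul]
          gcongr
          exact Finset.filter_subset _ _
      _ < 1 / 2 := hcard
  obtain ⟨H, hHP, hHcard, hH⟩ := exists_subset_card_le_and_not_disjoint
    (fun e _ => pairWeight_mem_Icc hX e) (by positivity) sum_weight
    (fun r hr => by
      obtain ⟨hQ, hr⟩ := Finset.mem_sigma.1 hr
      obtain ⟨⟨hS, hT⟩, -⟩ := mem_largePairs.1 hr
      exact offDiagProduct_subset_shallowPairs (hdeep hQ).1 hS hT (Finset.card_le_univ _)) missed
  refine ⟨H, hHP, hHcard.trans_eq (by ring), fun Q hQ hmQ r hr => ?_⟩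
  exact hH ⟨Q, r⟩ (Finset.mem_sigma.2 ⟨Finset.mem_filter.2 ⟨hQ, hmQ⟩, hr⟩)

end Rectangles

/-! ### The graph -/

section Threshold

variable {ε : ℝ}

/-- The depth `α` up to which the graph is complete, with the constant `c = 8`. -/
def depthThreshold (ε : ℝ) (n : ℕ) : ℕ := ⌈8 * (ε⁻¹ ^ 2 + 4 * Real.log n)⌉₊

lemma one_le_inv_sq (hε₀ : 0 < ε) (hε₁ : ε < 1) : 1 ≤ ε⁻¹ ^ 2 :=
  one_le_pow₀ ((one_le_inv₀ hε₀).2 hε₁.le)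

lemma two_le_mul_depthThreshold (hε₀ : 0 < ε) (hε₁ : ε < 1) (n : ℕ) :
    2 ≤ ε / 4 * depthThreshold ε n := by
  have hlog : 0 ≤ Real.log n := Real.log_natCast_nonneg n
  calc 2 ≤ 2 * ε⁻¹ := by linarith [(one_le_inv₀ hε₀).2 hε₁.le]
    _ = ε / 4 * (8 * ε⁻¹ ^ 2) := by field_simp; norm_num
    _ ≤ ε / 4 * (8 * (ε⁻¹ ^ 2 + 4 * Real.log n)) := by gcongr; linarith
    _ ≤ ε / 4 * depthThreshold ε n := by gcongr; exact Nat.le_ceil _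

lemma depthThreshold_le (hε₀ : 0 < ε) (hε₁ : ε < 1) (n : ℕ) :
    depthThreshold ε n ≤ 32 * ε⁻¹ ^ 2 * (1 + Real.log n) := by
  have hlog : 0 ≤ Real.log n := Real.log_natCast_nonneg n
  have hε := one_le_inv_sq hε₀ hε₁
  calc (depthThreshold ε n : ℝ) ≤ 8 * (ε⁻¹ ^ 2 + 4 * Real.log n) + 1 :=
        (Nat.ceil_lt_add_one (by positivity)).le
    _ ≤ 32 * ε⁻¹ ^ 2 * (1 + Real.log n) := by nlinarith

lemma four_mul_cube_mul_exp_neg_depthThreshold_lt (hε₀ : 0 < ε) (hε₁ : ε < 1) {n : ℕ}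
    (hn : 0 < n) : 4 * (n : ℝ) ^ 3 * Real.exp (-depthThreshold ε n) < 1 / 2 := by
  have hlog : 0 ≤ Real.log n := Real.log_natCast_nonneg n
  have exponent : 8 + Real.log n * 3 ≤ depthThreshold ε n :=
    le_trans (by linarith [one_le_inv_sq hε₀ hε₁]) (Nat.le_ceil _)
  have nine_le : 9 ≤ Real.exp 8 := by linarith [Real.add_one_le_exp 8]
  have hn' : (0 : ℝ) < n := mod_cast hn
  have cube : Real.exp (Real.log n * 3) = (n : ℝ) ^ 3 := by
    rw [← Real.rpow_def_of_pos hn', Real.rpow_ofNat]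
  calc 4 * (n : ℝ) ^ 3 * Real.exp (-depthThreshold ε n)
      ≤ 4 * (n : ℝ) ^ 3 * Real.exp (-(8 + Real.log n * 3)) := by gcongr
    _ = 4 / Real.exp 8 := by
        rw [Real.exp_neg, Real.exp_add, cube]
        field_simp
    _ ≤ 4 / 9 := by gcongr
    _ < 1 / 2 := by norm_num

lemma edge_count_le (hε₀ : 0 < ε) (hε₁ : ε < 1) (n : ℕ) :
    48 * n * (1 + Real.log n) * depthThreshold ε n +
        12 / (ε / 4) ^ 2 * (48 * n * (1 + Real.log n) * (1 + Real.log n)) ≤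
      10752 * ε⁻¹ ^ 4 * n * (1 + Real.log n) ^ 2 := by
  have : 0 ≤ Real.log n := Real.log_natCast_nonneg n
  have hε := one_le_inv_sq hε₀ hε₁
  calc _ ≤ 48 * n * (1 + Real.log n) * (32 * ε⁻¹ ^ 2 * (1 + Real.log n)) +
        12 / (ε / 4) ^ 2 * (48 * n * (1 + Real.log n) * (1 + Real.log n)) := by
        gcongr
        exact depthThreshold_le hε₀ hε₁ n
    _ = 10752 * ε⁻¹ ^ 2 * n * (1 + Real.log n) ^ 2 := by
        field_simp
        ring
    _ ≤ 10752 * ε⁻¹ ^ 4 * n * (1 + Real.log n) ^ 2 := by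
        gcongr 10752 * ?_ * n * (1 + Real.log n) ^ 2
        nlinarith

end Threshold

section Graph

variable {V : Type*}

lemma isConnector_of_forall_exists_adj [Finite V] {G : SimpleGraph V} {δ : ℝ}
    (h : ∀ S T : Set V, δ * Nat.card V ≤ S.ncard → δ * Nat.card V ≤ T.ncard →
      ∃ s ∈ S, ∃ t ∈ T, G.Adj s t) : IsConnector δ G := by
  intro S hS
  by_contra! hN
  have : ((Nbhd G S).ncard + (Nbhd G S)ᶜ.ncard : ℝ) = Nat.card V :=
    mod_cast ncard_add_ncard_compl (Nbhd G S)
  obtain ⟨s, hs, t, ht, hst⟩ := h S (Nbhd G S)ᶜ hS (by linarith)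
  exact ht ⟨s, hs, hst.symm⟩

lemma isConnector_induce_of_largePairs {G : SimpleGraph V} {δ : ℝ} {Q : Finset V}
    (h : ∀ r ∈ largePairs δ Q, ∃ s ∈ r.1, ∃ t ∈ r.2, G.Adj s t) :
    IsConnector δ (G.induce (Q : Set V)) := by
  have card_image (S : Set (Q : Set V)) :
      (S.toFinset.map (Function.Embedding.subtype _)).card = S.ncard := by
    rw [Finset.card_map, ncard_eq_toFinset_card']
  have image_subset (S : Set (Q : Set V)) :
      S.toFinset.map (Function.Embedding.subtype _) ⊆ Q := fun i hi => by
    obtain ⟨s, -, rfl⟩ := Finset.mem_map.1 hi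
    exact s.2
  refine isConnector_of_forall_exists_adj fun S T hS hT => ?_
  rw [Nat.card_coe_set_eq, ncard_coe_finset] at hS hT
  obtain ⟨s, hs, t, ht, hst⟩ := h (S.toFinset.map (Function.Embedding.subtype _),
    T.toFinset.map (Function.Embedding.subtype _)) (mem_largePairs.2 ⟨⟨image_subset S,
      image_subset T⟩, by rwa [card_image], by rwa [card_image]⟩)
  obtain ⟨s', hs', rfl⟩ := Finset.mem_map.1 hs
  obtain ⟨t', ht', rfl⟩ := Finset.mem_map.1 ht
  exact ⟨s', mem_toFinset.1 hs', t', mem_toFinset.1 ht', hst⟩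

lemma ncard_edgeSet_fromRel_le (H : Finset (V × V)) :
    (SimpleGraph.fromRel fun i j => (i, j) ∈ H).edgeSet.ncard ≤ H.card := by
  have edge_mem : (SimpleGraph.fromRel fun i j => (i, j) ∈ H).edgeSet ⊆
      (H.image Sym2.mk.uncurry : Finset (Sym2 V)) := by
    rintro ⟨i, j⟩ ⟨-, hij | hij⟩
    · exact Finset.mem_coe.2 (Finset.mem_image.2 ⟨(i, j), hij, rfl⟩)
    · exact Finset.mem_coe.2 (Finset.mem_image.2 ⟨(j, i), hij, Sym2.eq_swap⟩)
  calc _ ≤ ((H.image Sym2.mk.uncurry : Finset (Sym2 V)) : Set (Sym2 V)).ncard :=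
        ncard_le_ncard edge_mem
    _ ≤ H.card := by
        rw [ncard_coe_finset]
        exact Finset.card_image_le

end Graph

section Construction

variable {V : Type*} [Fintype V] {B : V → Set Plane} {c : V → Plane} {ε : ℝ}

lemma exists_pairs_complete_and_meeting (hB : ∀ i, IsRadial (c i) (B i)) (hε₀ : 0 < ε)
    (hε₁ : ε < 1) (hV : 0 < Fintype.card V) :
    ∃ H ⊆ shallowPairs (coverings B) (Fintype.card V),
      (H.card : ℝ) ≤ 10752 * ε⁻¹ ^ 4 * Fintype.card V * (1 + Real.log (Fintype.card V)) ^ 2 ∧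
      shallowPairs (coverings B) (depthThreshold ε (Fintype.card V)) ⊆ H ∧
      ∀ Q ∈ coverings B, depthThreshold ε (Fintype.card V) < Q.card →
        ∀ r ∈ largePairs (ε / 4) Q, ¬ Disjoint H (offDiagProduct r.1 r.2) := by
  have : 0 ≤ Real.log (Fintype.card V) := Real.log_natCast_nonneg _
  have few_ranges : (coverings B).card * Real.exp (-depthThreshold ε (Fintype.card V)) < 1 / 2 := by
    have := card_coverings_le hB hV
    rw [finrank_euclideanSpace_fin] at this
    refine lt_of_le_of_lt ?_ (four_mul_cube_mul_exp_neg_depthThreshold_lt hε₀ hε₁ hV)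
    gcongr
    exact_mod_cast this
  obtain ⟨H, hH, hcard, hmeet⟩ := exists_subset_shallowPairs_meeting_largePairs
    (by positivity) (by positivity)
    (sum_inv_pairDepth_le (card_shallowPairs_le hB) (by positivity) _)
    (two_le_mul_depthThreshold hε₀ hε₁ (Fintype.card V)) few_ranges
  refine ⟨shallowPairs (coverings B) (depthThreshold ε (Fintype.card V)) ∪ H,
    Finset.union_subset shallowPairs_subset_card hH, ?_, Finset.subset_union_left,
    fun Q hQ hdeep r hr hdisj => hmeet Q hQ hdeep r hr
      (hdisj.mono_left Finset.subset_union_right)⟩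
  calc _ ≤ ((shallowPairs (coverings B) (depthThreshold ε (Fintype.card V))).card + H.card : ℝ) :=
        mod_cast Finset.card_union_le _ _
    _ ≤ _ := add_le_add (card_shallowPairs_le hB _) hcard
    _ ≤ _ := edge_count_le hε₀ hε₁ _

lemma fromRel_le_of_subset_shallowPairs {H : Finset (V × V)} {k : ℕ}
    (hH : H ⊆ shallowPairs (coverings B) k) :
    SimpleGraph.fromRel (fun i j => (i, j) ∈ H) ≤
      SimpleGraph.fromRel fun i j => (B i ∩ B j).Nonempty := by
  have meet {i j : V} (hij : (i, j) ∈ H) : (B i ∩ B j).Nonempty := by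
    obtain ⟨-, Q, hQ, hi, hj, -⟩ := mem_shallowPairs.1 (hH hij)
    obtain ⟨p, rfl⟩ := mem_coverings.1 hQ
    exact ⟨p, mem_covering.1 hi, mem_covering.1 hj⟩
  exact fun i j hij => ⟨hij.1, hij.2.imp meet meet⟩

theorem depth_expander_construction_general (hB : ∀ i, IsRadial (c i) (B i)) (hε₀ : 0 < ε)
    (hε₁ : ε < 1) :
    ∃ H : SimpleGraph V, H ≤ SimpleGraph.fromRel (fun i j => (B i ∩ B j).Nonempty) ∧
      (H.edgeSet.ncard : ℝ) ≤
        10752 * ε⁻¹ ^ 4 * Fintype.card V * (1 + Real.log (Fintype.card V)) ^ 2 ∧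
      (∀ p, (covering B p).card ≤ depthThreshold ε (Fintype.card V) →
        ∀ i j, p ∈ B i → p ∈ B j → i ≠ j → H.Adj i j) ∧
      ∀ p, depthThreshold ε (Fintype.card V) < (covering B p).card →
        IsConnector (ε / 4) (H.induce {i | p ∈ B i}) := by
  rcases isEmpty_or_nonempty V with hV | hV
  · exact ⟨⊥, bot_le, by simp, fun p _ i => isEmptyElim i, fun p hp => by
      simp [Finset.eq_empty_of_isEmpty] at hp⟩
  obtain ⟨H, hH, hcard, hshallow, hmeet⟩ :=
    exists_pairs_complete_and_meeting hB hε₀ hε₁ Fintype.card_pos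
  refine ⟨SimpleGraph.fromRel fun i j => (i, j) ∈ H, fromRel_le_of_subset_shallowPairs hH,
    (Nat.cast_le.2 (ncard_edgeSet_fromRel_le H)).trans hcard, fun p hp i j hi hj hij => ?_,
    fun p hp => ?_⟩
  · exact ⟨hij, .inl (hshallow (mem_shallowPairs.2 ⟨hij, covering B p, mem_coverings.2 ⟨p, rfl⟩,
      mem_covering.2 hi, mem_covering.2 hj, hp⟩))⟩
  · have covering_eq : {i | p ∈ B i} = (covering B p : Set V) := by ext; simp
    rw [covering_eq]
    refine isConnector_induce_of_largePairs fun r hr => ?_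
    obtain ⟨e, he, he'⟩ :=
      Finset.not_disjoint_iff.1 (hmeet _ (mem_coverings.2 ⟨p, rfl⟩) hp r hr)
    obtain ⟨he', hne⟩ := Finset.mem_filter.1 he'
    obtain ⟨hs, ht⟩ := Finset.mem_product.1 he'
    exact ⟨e.1, hs, e.2, ht, hne, .inl he⟩

end Construction

lemma diskDepth_eq_card_covering (D : Finset (Set Plane)) (p : Plane) :
    diskDepth D p = (covering (Subtype.val : {d // d ∈ D} → Set Plane) p).card := by
  rw [diskDepth, ← ncard_coe_finset, ← ncard_image_of_injective _ Subtype.val_injective]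
  congr 1
  ext d
  simp [and_comm]

/-- There are universal constants `C, c > 0` so that for every
`ε ∈ (0,1)` and finite set `D` of `n` disks in general position, setting
`α = ⌈c·(ε⁻² + 4·ln n)⌉`, there is a subgraph `H` of the intersection graph
with at most `C·ε⁻⁴·n·(1 + log n)²` edges such that (i) for every point of
depth at most `α` the subgraph of `H` induced on the disks covering it is
complete, and (ii) for every point of depth larger than `α` that induced
subgraph is an `(ε/4)`-connector. -/
theorem depth_expander_construction :
    ∃ C c : ℝ, 0 < C ∧ 0 < c ∧
      ∀ (ε : ℝ), 0 < ε → ε < 1 →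
      ∀ (D : Finset (Set Plane)), (∀ d ∈ D, IsDisk d) → GeneralPosition D →
      ∃ H : SimpleGraph {d // d ∈ D}, H ≤ IG D ∧
        (H.edgeSet.ncard : ℝ) ≤ C * ε⁻¹ ^ 4 * D.card * (1 + Real.log D.card) ^ 2 ∧
        (∀ p : Plane, diskDepth D p ≤ ⌈c * (ε⁻¹ ^ 2 + 4 * Real.log D.card)⌉₊ →
          ∀ d₁ d₂ : {d // d ∈ D}, p ∈ d₁.1 → p ∈ d₂.1 → d₁ ≠ d₂ → H.Adj d₁ d₂) ∧
        (∀ p : Plane, ⌈c * (ε⁻¹ ^ 2 + 4 * Real.log D.card)⌉₊ < diskDepth D p →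
          IsConnector (ε / 4) (H.induce {d : {d // d ∈ D} | p ∈ d.1})) := by
  refine ⟨10752, 8, by norm_num, by norm_num, fun ε hε₀ hε₁ D hD _ => ?_⟩
  choose c hc using fun d : {d // d ∈ D} => isRadial_of_isDisk (hD d d.2)
  simpa only [IG, depthThreshold, Fintype.card_coe, ← diskDepth_eq_card_covering] using
    depth_expander_construction_general hc hε₀ hε₁
end
end

section
/- Let ε ∈ (0,1), let V be a finite set of ν objects, and let ξ be an integer with ν ≤ ξ ≤ 2ν. Let χ_1, …, χ_M : V → ℤ/ξℤ be independent uniformly random colorings, and let G be the graph on V in which distinct u, v are adjacent iff for some i ∈ {1,…,M}, χ_i(u) − χ_i(v) ≡ ±1 (mod ξ). If ν ≥ 640/ε² and M ≥ 2600/ε², then with probability at least 1 − exp(−4ν), the graph G is an (ε/4)-connector. -/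
open scoped Classical

noncomputable section

/-!
If the graph is not a connector, then there are disjoint sets `A`, `B` of `m ≈ εν/8` vertices with
no edge between them. For a single random coloring, condition on the colors of `A`: each vertex of
`B` must miss the successor colors of `A`, so the probability of no edge is the expectation of
`(1 - |χ(A)|/ξ) ^ m ≤ r ^ |χ(A)|` with `r = exp (-m/ξ)`. Revealing the colors of `A` one at a
time, each is new with probability at least `1 - m/ξ`, which bounds this expectation by
`(r + (m/ξ) (1 - r)) ^ m ≤ exp (-m²/(2ξ))`. The `M` colorings are independent, so the probability
of no edge between `A` and `B` is at most `exp (-M m²/(2ξ)) ≤ exp (-6ν)`, and a union bound over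
the at most `4 ^ ν ≤ exp (2ν)` pairs concludes. Of the successor map `c ↦ c + 1` on colors, only the
bijectivity matters.
-/

section

open Finset Function
open scoped BigOperators

variable {V C ι : Type*}

/-- The graph of a family of colorings `χ`, joining two vertices when some `χ i` gives them
successive colors. The successor of a color `c` is `σ c`; `σ c = c + 1` on `ZMod ξ` gives the
graph of the main theorem. -/
def colorSuccGraph (σ : Equiv.Perm C) (χ : ι → V → C) : SimpleGraph V :=
  SimpleGraph.fromRel fun u v => ∃ i, χ i v = σ (χ i u)

theorem fromRel_sub_eq_one_eq_colorSuccGraph [AddGroupWithOne C] (χ : ι → V → C) :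
    (SimpleGraph.fromRel fun u v => ∃ i, χ i u - χ i v = 1 ∨ χ i v - χ i u = 1) =
      colorSuccGraph (Equiv.addLeft 1) χ := by
  ext u v
  simp only [colorSuccGraph, SimpleGraph.fromRel_adj, sub_eq_iff_eq_add, Equiv.coe_addLeft,
    exists_or]
  tauto

variable [Fintype V] [Fintype C]

theorem expect_expect_update (v : V) (F : (V → C) → ℝ) :
    𝔼 f, 𝔼 c, F (update f v c) = 𝔼 f, F f := by
  have swap_involutive : Involutive fun p : (V → C) × C => (update p.1 v p.2, p.1 v) := by
    rintro ⟨f, c⟩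
    simp
  calc 𝔼 f, 𝔼 c, F (update f v c)
      = 𝔼 p : (V → C) × C, F (update p.1 v p.2) := by rw [← univ_product_univ, expect_product]
    _ = 𝔼 p : (V → C) × C, F p.1 :=
        Fintype.expect_equiv swap_involutive.toPerm _ _ fun _ => rfl
    _ = 𝔼 f, F f := by
        rw [← univ_product_univ, expect_product]
        refine expect_congr rfl fun f _ => ?_
        have : Nonempty C := ⟨f v⟩
        exact Fintype.expect_const (F f)

-- `ψ` carries the factors of the vertices already averaged out through the induction on `B`.
theorem expect_mul_prod_eq_expect_mul_pow (B : Finset V) (φ : (V → C) → C → ℝ)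
    (hφ : ∀ v ∈ B, ∀ f c, φ (update f v c) = φ f) (ψ : (V → C) → ℝ)
    (hψ : ∀ v ∈ B, ∀ f c, ψ (update f v c) = ψ f) :
    𝔼 f, ψ f * ∏ v ∈ B, φ f (f v) = 𝔼 f, ψ f * (𝔼 c, φ f c) ^ #B := by
  induction B using Finset.induction_on generalizing ψ with
  | empty => simp
  | insert v B hv ih =>
    rw [forall_mem_insert] at hφ hψ
    have prod_update (f : V → C) (c : C) :
        ∏ w ∈ B, φ f (update f v c w) = ∏ w ∈ B, φ f (f w) :=
      prod_congr rfl fun w hw => by rw [update_of_ne (ne_of_mem_of_not_mem hw hv)]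
    calc 𝔼 f, ψ f * ∏ w ∈ insert v B, φ f (f w)
        = 𝔼 f, 𝔼 c, ψ f * (φ f c * ∏ w ∈ B, φ f (f w)) := by
          rw [← expect_expect_update v]
          simp only [prod_insert hv, hφ.1, hψ.1, update_self, prod_update]
      _ = 𝔼 f, (ψ f * 𝔼 c, φ f c) * ∏ w ∈ B, φ f (f w) := by
          simp only [mul_expect, expect_mul, mul_assoc]
      _ = 𝔼 f, (ψ f * 𝔼 c, φ f c) * (𝔼 c, φ f c) ^ #B :=
          ih hφ.2 _ fun w hw f c => by rw [hψ.2 w hw, hφ.2 w hw]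
      _ = 𝔼 f, ψ f * (𝔼 c, φ f c) ^ #(insert v B) := by
          simp only [card_insert_of_notMem hv, pow_succ', mul_assoc]

theorem expect_pow_card_insert [Nonempty C] (r : ℝ) (I : Finset C) :
    𝔼 c, r ^ #(insert c I) = (r + #I / Fintype.card C * (1 - r)) * r ^ #I := by
  have pow_card_insert (c : C) :
      r ^ #(insert c I) = (r + if c ∈ I then 1 - r else 0) * r ^ #I := by
    split_ifs with hc
    · rw [insert_eq_of_mem hc]; ring
    · rw [card_insert_of_notMem hc]; ring
  simp only [pow_card_insert, ← expect_mul, expect_add_distrib, Fintype.expect_const]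
  rw [Fintype.expect_eq_sum_div_card, sum_ite_mem, univ_inter, sum_const, nsmul_eq_mul]
  ring

theorem expect_pow_card_image_le [Nonempty C] {r : ℝ} (hr₀ : 0 ≤ r) (hr₁ : r ≤ 1) {k : ℕ}
    (A : Finset V) (hA : #A ≤ k) :
    𝔼 f : V → C, r ^ #(A.image f) ≤ (r + k / Fintype.card C * (1 - r)) ^ #A := by
  have : 0 ≤ 1 - r := sub_nonneg.2 hr₁
  induction A using Finset.induction_on with
  | empty => simp
  | insert v A hv ih =>
    rw [card_insert_of_notMem hv] at hA ⊢
    have image_update (f : V → C) (c : C) :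
        (insert v A).image (update f v c) = insert c (A.image f) := by
      rw [image_insert, update_self]
      congr 1
      exact image_congr fun w hw => update_of_ne (ne_of_mem_of_not_mem hw hv) _ _
    calc 𝔼 f : V → C, r ^ #((insert v A).image f)
        = 𝔼 f : V → C, (r + #(A.image f) / Fintype.card C * (1 - r)) * r ^ #(A.image f) := by
          rw [← expect_expect_update v]
          simp only [image_update, expect_pow_card_insert]
      _ ≤ 𝔼 f : V → C, (r + k / Fintype.card C * (1 - r)) * r ^ #(A.image f) := by
          gcongr with f
          exact card_image_le.trans (by omega)
      _ = (r + k / Fintype.card C * (1 - r)) * 𝔼 f : V → C, r ^ #(A.image f) :=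
          (mul_expect _ _ _).symm
      _ ≤ (r + k / Fintype.card C * (1 - r)) * (r + k / Fintype.card C * (1 - r)) ^ #A := by
          gcongr
          exact ih (by omega)
      _ = (r + k / Fintype.card C * (1 - r)) ^ (#A + 1) := (pow_succ' _ _).symm

/-- The colorings that create no edge from `A` to `B`: no vertex of `B` receives the successor
`σ c` of a color `c` used on `A`. -/
def edgeFreeColorings (σ : Equiv.Perm C) (A B : Finset V) : Finset (V → C) :=
  {f | ∀ u ∈ A, ∀ v ∈ B, f v ≠ σ (f u)}

theorem card_edgeFreeColorings [Nonempty C] (σ : Equiv.Perm C) {A B : Finset V}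
    (hAB : Disjoint A B) :
    (#(edgeFreeColorings σ A B) : ℝ) =
      Fintype.card (V → C) * 𝔼 f : V → C, (1 - #(A.image f) / Fintype.card C : ℝ) ^ #B := by
  let successors (f : V → C) : Finset C := (A.image f).map σ.toEmbedding
  let allowed (f : V → C) (c : C) : ℝ := if c ∉ successors f then 1 else 0
  have allowed_update : ∀ v ∈ B, ∀ f c, allowed (update f v c) = allowed f := by
    intro v hv f c
    have image_update : A.image (update f v c) = A.image f :=
      image_congr fun u hu => update_of_ne (disjoint_iff_ne.1 hAB u hu v hv) _ _
    simp only [allowed, successors, image_update]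
  have expect_allowed (f : V → C) :
      𝔼 c, allowed f c = 1 - #(A.image f) / Fintype.card C := by
    rw [Fintype.expect_eq_sum_div_card, sum_boole, filter_notMem_eq_sdiff, ← compl_eq_univ_sdiff,
      card_compl, card_map, Nat.cast_sub (card_le_univ _)]
    field_simp
  calc (#(edgeFreeColorings σ A B) : ℝ)
      = ∑ f : V → C, ∏ v ∈ B, allowed f (f v) := by
        rw [edgeFreeColorings, natCast_card_filter]
        refine sum_congr rfl fun f _ => ?_
        rw [prod_boole]
        congr 1
        simp only [successors, mem_map_equiv, mem_image]
        grind
    _ = Fintype.card (V → C) * 𝔼 f : V → C, 1 * ∏ v ∈ B, allowed f (f v) := by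
        simp only [one_mul, Fintype.card_mul_expect]
    _ = _ := by
        rw [expect_mul_prod_eq_expect_mul_pow B allowed allowed_update _ fun _ _ _ _ => rfl]
        simp only [one_mul, expect_allowed]

theorem exp_neg_add_mul_one_sub_exp_neg_le {s t : ℝ} (hs : s ≤ 1 / 3) (ht₀ : 0 ≤ t)
    (ht : t ≤ 1 / 3) :
    Real.exp (-t) + s * (1 - Real.exp (-t)) ≤ Real.exp (-(t / 2)) := by
  have exp_mul_le : Real.exp (-t) * (1 + t) ≤ 1 := by
    rw [Real.exp_neg, inv_mul_le_one₀ (Real.exp_pos t), add_comm]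
    exact Real.add_one_le_exp t
  have three_quarters_le : 3 / 4 * t ≤ 1 - Real.exp (-t) := by nlinarith
  calc Real.exp (-t) + s * (1 - Real.exp (-t)) ≤ 1 - t / 2 := by nlinarith
    _ ≤ Real.exp (-(t / 2)) := Real.one_sub_le_exp_neg _

theorem expect_one_sub_card_image_div_pow_le [Nonempty C] {A : Finset V} {b : ℕ}
    (hA : 3 * #A ≤ Fintype.card C) (hb : 3 * b ≤ Fintype.card C) :
    𝔼 f : V → C, (1 - #(A.image f) / Fintype.card C : ℝ) ^ b ≤
      Real.exp (-(#A * b / (2 * Fintype.card C))) := by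
  set n : ℝ := (Fintype.card C : ℝ) with hn
  have n_pos : 0 < n := by
    rw [hn]
    exact_mod_cast Fintype.card_pos (α := C)
  have div_le_third {k : ℕ} (hk : 3 * k ≤ Fintype.card C) : k / n ≤ 1 / 3 := by
    rw [div_le_iff₀ n_pos, hn]
    have : (3 * k : ℝ) ≤ Fintype.card C := by exact_mod_cast hk
    linarith
  set r : ℝ := Real.exp (-(b / n)) with hr
  have r_le_one : r ≤ 1 := Real.exp_le_one_iff.2 (by simp only [Left.neg_nonpos_iff]; positivity)
  have pow_le_pow_card (f : V → C) : (1 - #(A.image f) / n) ^ b ≤ r ^ #(A.image f) := by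
    have base_nonneg : 0 ≤ 1 - #(A.image f) / n := by
      rw [sub_nonneg, div_le_one n_pos, hn]
      exact_mod_cast card_le_univ _
    calc (1 - #(A.image f) / n) ^ b ≤ Real.exp (-(#(A.image f) / n)) ^ b := by
          gcongr
          exact Real.one_sub_le_exp_neg _
      _ = r ^ #(A.image f) := by
          rw [hr, ← Real.exp_nat_mul, ← Real.exp_nat_mul]
          ring_nf
  calc 𝔼 f : V → C, (1 - #(A.image f) / n) ^ b
      ≤ 𝔼 f : V → C, r ^ #(A.image f) := expect_le_expect fun f _ => pow_le_pow_card f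
    _ ≤ (r + #A / n * (1 - r)) ^ #A :=
        expect_pow_card_image_le (Real.exp_pos _).le r_le_one A le_rfl
    _ ≤ Real.exp (-(b / n / 2)) ^ #A := by
        have one_sub_nonneg : 0 ≤ 1 - r := sub_nonneg.2 r_le_one
        gcongr
        exact exp_neg_add_mul_one_sub_exp_neg_le (div_le_third hA) (by positivity) (div_le_third hb)
    _ = Real.exp (-(#A * b / (2 * n))) := by
        rw [← Real.exp_nat_mul]
        ring_nf

theorem card_edgeFreeColorings_le [Nonempty C] (σ : Equiv.Perm C) {A B : Finset V}
    (hAB : Disjoint A B) (hA : 3 * #A ≤ Fintype.card C) (hB : 3 * #B ≤ Fintype.card C) :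
    (#(edgeFreeColorings σ A B) : ℝ) ≤
      Fintype.card (V → C) * Real.exp (-(#A * #B / (2 * Fintype.card C))) := by
  rw [card_edgeFreeColorings σ hAB]
  gcongr
  exact expect_one_sub_card_image_div_pow_le hA hB

theorem card_piFinset_edgeFreeColorings_le [Fintype ι] [Nonempty C] (σ : Equiv.Perm C)
    {A B : Finset V} (hAB : Disjoint A B) (hA : 3 * #A ≤ Fintype.card C)
    (hB : 3 * #B ≤ Fintype.card C) :
    (#(Fintype.piFinset fun _ : ι => edgeFreeColorings σ A B) : ℝ) ≤
      Real.exp (-(#A * #B / (2 * Fintype.card C))) ^ Fintype.card ι *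
        Fintype.card (ι → V → C) := by
  rw [Fintype.card_piFinset, prod_const, card_univ, Fintype.card_fun (α := ι), Nat.cast_pow,
    Nat.cast_pow, ← mul_pow, mul_comm]
  gcongr
  exact card_edgeFreeColorings_le σ hAB hA hB

theorem exists_disjoint_card_eq_forall_not_adj {G : SimpleGraph V} {δ : ℝ} {m : ℕ}
    (hm : 2 * m ≤ δ * Fintype.card V) (hG : ¬IsConnector δ G) :
    ∃ A B : Finset V, Disjoint A B ∧ #A = m ∧ #B = m ∧ ∀ u ∈ A, ∀ v ∈ B, ¬G.Adj v u := by
  simp only [IsConnector, not_forall, not_lt, Nat.card_eq_fintype_card] at hG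
  obtain ⟨S, hS, hN⟩ := hG
  set T : Set V := (Nbhd G S)ᶜ
  have card_T : (T.ncard : ℝ) = Fintype.card V - (Nbhd G S).ncard := by
    rw [← Nat.card_eq_fintype_card, ← Set.ncard_add_ncard_compl (Nbhd G S)]
    push_cast
    ring
  have le_card_S : 2 * m ≤ #S.toFinset := by
    rw [← Set.ncard_eq_toFinset_card']
    exact_mod_cast hm.trans hS
  have le_card_T : 2 * m ≤ #T.toFinset := by
    rw [← Set.ncard_eq_toFinset_card']
    have : (2 * m : ℝ) ≤ T.ncard := by linarith
    exact_mod_cast this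
  obtain ⟨A, hAS, hA⟩ := exists_subset_card_eq (show m ≤ #S.toFinset by omega)
  have le_card_sdiff : m ≤ #(T.toFinset \ A) := by
    have := le_card_sdiff A T.toFinset
    omega
  obtain ⟨B, hBT, hB⟩ := exists_subset_card_eq le_card_sdiff
  refine ⟨A, B, disjoint_sdiff.mono_right hBT, hA, hB, fun u hu v hv hvu => ?_⟩
  have hvT : v ∈ T := Set.mem_toFinset.1 (mem_sdiff.1 (hBT hv)).1
  exact hvT ⟨u, Set.mem_toFinset.1 (hAS hu), hvu⟩

theorem exists_forall_mem_edgeFreeColorings {σ : Equiv.Perm C} {χ : ι → V → C} {δ : ℝ} {m : ℕ}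
    (hm : 2 * m ≤ δ * Fintype.card V) (hχ : ¬IsConnector δ (colorSuccGraph σ χ)) :
    ∃ A B : Finset V, Disjoint A B ∧ #A = m ∧ #B = m ∧ ∀ i, χ i ∈ edgeFreeColorings σ A B := by
  obtain ⟨A, B, hAB, hA, hB, not_adj⟩ := exists_disjoint_card_eq_forall_not_adj hm hχ
  refine ⟨A, B, hAB, hA, hB, fun i => (mem_filter_univ _).2 fun u hu v hv succ => ?_⟩
  exact not_adj u hu v hv ⟨(disjoint_iff_ne.1 hAB u hu v hv).symm, Or.inr ⟨i, succ⟩⟩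

theorem ncard_not_isConnector_colorSuccGraph_le [Fintype ι] [Nonempty C] (σ : Equiv.Perm C)
    {δ : ℝ} {m : ℕ} (hm : 2 * m ≤ δ * Fintype.card V) (hmC : 3 * m ≤ Fintype.card C) :
    ({χ : ι → V → C | ¬IsConnector δ (colorSuccGraph σ χ)}.ncard : ℝ) ≤
      4 ^ Fintype.card V * Real.exp (-(m * m / (2 * Fintype.card C))) ^ Fintype.card ι *
        Fintype.card (ι → V → C) := by
  set bound : ℝ :=
    Real.exp (-(m * m / (2 * Fintype.card C))) ^ Fintype.card ι * Fintype.card (ι → V → C)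
  let pairs : Finset (Finset V × Finset V) := {p | Disjoint p.1 p.2 ∧ #p.1 = m ∧ #p.2 = m}
  let edgeFree (p : Finset V × Finset V) : Finset (ι → V → C) :=
    Fintype.piFinset fun _ => edgeFreeColorings σ p.1 p.2
  have subset_biUnion :
      {χ : ι → V → C | ¬IsConnector δ (colorSuccGraph σ χ)} ⊆ pairs.biUnion edgeFree := by
    intro χ hχ
    obtain ⟨A, B, hAB, hA, hB, h⟩ := exists_forall_mem_edgeFreeColorings hm hχ
    exact mem_biUnion.2
      ⟨(A, B), (mem_filter_univ _).2 ⟨hAB, hA, hB⟩, Fintype.mem_piFinset.2 h⟩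
  have card_edgeFree_le : ∀ p ∈ pairs, (#(edgeFree p) : ℝ) ≤ bound := by
    rintro ⟨A, B⟩ hp
    obtain ⟨hAB, rfl, hB⟩ := (mem_filter_univ _).1 hp
    simpa only [hB] using
      card_piFinset_edgeFreeColorings_le (ι := ι) σ hAB hmC (by rwa [hB])
  have card_pairs_le : #pairs ≤ 4 ^ Fintype.card V := by
    refine (card_le_univ pairs).trans_eq ?_
    rw [Fintype.card_prod, Fintype.card_finset, ← mul_pow]
    norm_num
  calc ({χ : ι → V → C | ¬IsConnector δ (colorSuccGraph σ χ)}.ncard : ℝ)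
      ≤ #(pairs.biUnion edgeFree) := by
        rw [← Set.ncard_coe_finset]
        exact_mod_cast Set.ncard_le_ncard subset_biUnion
    _ ≤ ∑ p ∈ pairs, (#(edgeFree p) : ℝ) := by exact_mod_cast card_biUnion_le
    _ ≤ #pairs * bound := by
        rw [← nsmul_eq_mul]
        exact sum_le_card_nsmul _ _ _ card_edgeFree_le
    _ ≤ 4 ^ Fintype.card V * bound := by
        gcongr
        exact_mod_cast card_pairs_le
    _ = _ := (mul_assoc _ _ _).symm

theorem four_pow_mul_exp_neg_pow_le {ε n m : ℝ} {ν M : ℕ} (hε : 0 < ε) (hn₀ : 0 < n)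
    (hn : n ≤ 2 * ν) (hM : 2600 / ε ^ 2 ≤ M) (hm : ε * ν / 10 ≤ m) :
    4 ^ ν * Real.exp (-(m * m / (2 * n))) ^ M ≤ Real.exp (-4 * ν) := by
  have ν_pos : (0 : ℝ) < ν := by linarith
  have four_le : (4 : ℝ) ≤ Real.exp 2 := by
    have : (2 : ℝ) ≤ Real.exp 1 := by linarith [Real.add_one_le_exp (1 : ℝ)]
    calc (4 : ℝ) = 2 * 2 := by norm_num
      _ ≤ Real.exp 1 * Real.exp 1 := by gcongr
      _ = Real.exp 2 := by rw [← Real.exp_add]; norm_num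
  have m_nonneg : 0 ≤ m := hm.trans' (by positivity)
  have exponent_le : 6 * ν ≤ M * (m * m / (2 * n)) := by
    calc (6 * ν : ℝ) ≤ 2600 / ε ^ 2 * (ε * ν / 10 * (ε * ν / 10) / (2 * (2 * ν))) := by
          field_simp
          norm_num
      _ ≤ M * (m * m / (2 * n)) := by gcongr
  calc 4 ^ ν * Real.exp (-(m * m / (2 * n))) ^ M
      ≤ Real.exp 2 ^ ν * Real.exp (-(m * m / (2 * n))) ^ M := by gcongr
    _ = Real.exp (ν * 2 - M * (m * m / (2 * n))) := by
        rw [← Real.exp_nat_mul, ← Real.exp_nat_mul, ← Real.exp_add]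
        ring_nf
    _ ≤ Real.exp (-4 * ν) := Real.exp_le_exp.2 (by linarith)

theorem random_coloring_graph_is_connector_general [Fintype ι] {ε : ℝ} (hε : 0 < ε)
    (σ : Equiv.Perm C)
    (hCl : ε * Fintype.card V ≤ Fintype.card C) (hCu : Fintype.card C ≤ 2 * Fintype.card V)
    (hν : 40 ≤ ε * Fintype.card V) (hM : 2600 / ε ^ 2 ≤ Fintype.card ι) :
    (1 - Real.exp (-4 * Fintype.card V)) * Nat.card (ι → V → C) ≤
      {χ : ι → V → C | IsConnector (ε / 4) (colorSuccGraph σ χ)}.ncard := by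
  have card_C_pos : (0 : ℝ) < Fintype.card C := by linarith
  have : Nonempty C := Fintype.card_pos_iff.1 (by exact_mod_cast card_C_pos)
  obtain ⟨m, m_le, le_m⟩ : ∃ m : ℕ, m ≤ ε * Fintype.card V / 8 ∧ ε * Fintype.card V / 10 ≤ m :=
    ⟨⌊ε * Fintype.card V / 8⌋₊, Nat.floor_le (by positivity),
      by linarith [Nat.lt_floor_add_one (ε * Fintype.card V / 8)]⟩
  have three_mul_le : 3 * m ≤ Fintype.card C := by
    have : (3 * m : ℝ) ≤ Fintype.card C := by linarith
    exact_mod_cast this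
  have bad_le : ({χ : ι → V → C | IsConnector (ε / 4) (colorSuccGraph σ χ)}ᶜ.ncard : ℝ) ≤
      Real.exp (-4 * Fintype.card V) * Nat.card (ι → V → C) := by
    rw [Nat.card_eq_fintype_card]
    refine (ncard_not_isConnector_colorSuccGraph_le σ (by linarith) three_mul_le).trans ?_
    gcongr
    exact four_pow_mul_exp_neg_pow_le hε card_C_pos (by exact_mod_cast hCu) hM le_m
  have good_add_bad := Set.ncard_add_ncard_compl
    {χ : ι → V → C | IsConnector (ε / 4) (colorSuccGraph σ χ)}
  rify at good_add_bad
  linarith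

end

/-- Let `ε ∈ (0,1)`, `V` a finite set of `ν` objects, and `ξ`
an integer with `ν ≤ ξ ≤ 2ν`.  Choose `M` independent uniformly random
colorings `χ₁, …, χ_M : V → ℤ/ξℤ` and connect distinct `u, v` whenever, for
some `i`, `χᵢ(u) − χᵢ(v) ≡ ±1 (mod ξ)`.  If `ν ≥ 640/ε²` and `M ≥ 2600/ε²`,
then with probability at least `1 − exp(−4ν)` the resulting graph is an
`(ε/4)`-connector.  (Probability is modelled by counting colorings.) -/
theorem random_coloring_graph_is_connector
    (ε : ℝ) (hε : 0 < ε) (hε1 : ε < 1)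
    (V : Type*) [Fintype V] (ξ M : ℕ)
    (hξl : Fintype.card V ≤ ξ) (hξu : ξ ≤ 2 * Fintype.card V)
    (hν : (640 : ℝ) / ε ^ 2 ≤ (Fintype.card V : ℝ))
    (hM : (2600 : ℝ) / ε ^ 2 ≤ (M : ℝ)) :
    (1 - Real.exp (-4 * (Fintype.card V : ℝ))) *
        (Nat.card (Fin M → V → ZMod ξ) : ℝ) ≤
      (({χ : Fin M → V → ZMod ξ |
          IsConnector (ε / 4)
            (SimpleGraph.fromRel fun u v =>
              ∃ i : Fin M, χ i u - χ i v = 1 ∨ χ i v - χ i u = 1)}).ncard : ℝ) := by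
  have ν_large : 640 ≤ ε ^ 2 * Fintype.card V := by rwa [div_le_iff₀' (by positivity)] at hν
  have ν_pos : (0 : ℝ) < Fintype.card V := pos_of_mul_pos_right (by linarith) (sq_nonneg ε)
  have : NeZero ξ := ⟨by have : 0 < Fintype.card V := mod_cast ν_pos; omega⟩
  simp only [fromRel_sub_eq_one_eq_colorSuccGraph]
  refine random_coloring_graph_is_connector_general hε _ ?_ (by rwa [ZMod.card]) ?_ (by simpa)
  · calc ε * Fintype.card V ≤ 1 * Fintype.card V := by gcongr
      _ ≤ Fintype.card (ZMod ξ) := by rw [ZMod.card, one_mul]; exact_mod_cast hξl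
  · nlinarith
end
end

section
/- Let S be a finite set of ν objects, let ξ be an integer with ξ ≥ ν, and let χ : S → {1,…,ξ} be a uniformly random coloring (each element colored independently and uniformly). Let X = |χ(S)| be the number of distinct colors used on S. Then Prob[X < ν/e²] < exp(−ν). -/
/-!
A coloring with at most `k` colors takes its values in one of the `ξ.choose k` color sets of
size `k`, so there are at most `ξ.choose k * k ^ ν` of them. Since `ξ.choose k ≤ ξ ^ k / k!` and
`k ^ k / k! ≤ exp k`, their proportion among all `ξ ^ ν` colorings is at most
`exp k * (k / ξ) ^ (ν - k)`. If `k / ξ ≤ exp (-2)`, this is at most `exp (3 * k - 2 * ν)`,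
which is below `exp (-ν)` as soon as `3 * k < ν`.
-/

section Counting

variable {S α : Type*} [Fintype α] {k : ℕ}

theorem exists_finset_card_eq_forall_mem_of_ncard_range_le {χ : S → α}
    (hk : k ≤ Fintype.card α) (hχ : (Set.range χ).ncard ≤ k) :
    ∃ T : Finset α, T.card = k ∧ ∀ s, χ s ∈ T := by
  have hfin : (Set.range χ).Finite := Set.toFinite _
  rw [Set.ncard_eq_toFinset_card _ hfin] at hχ
  obtain ⟨T, hsub, hcard⟩ := Finset.exists_superset_card_eq hχ hk
  exact ⟨T, hcard, fun s => hsub (hfin.mem_toFinset.mpr (Set.mem_range_self s))⟩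

variable [Fintype S]

theorem ncard_setOf_ncard_range_le_le_choose_mul_pow (hk : k ≤ Fintype.card α) :
    {χ : S → α | (Set.range χ).ncard ≤ k}.ncard ≤
      (Fintype.card α).choose k * k ^ Fintype.card S := by
  classical
  let colorings (T : Finset α) : Finset (S → α) := Fintype.piFinset fun _ => T
  have hcover : {χ : S → α | (Set.range χ).ncard ≤ k} ⊆
      ((Finset.univ.powersetCard k).biUnion colorings : Finset (S → α)) := by
    intro χ hχ
    obtain ⟨T, hcard, hmem⟩ := exists_finset_card_eq_forall_mem_of_ncard_range_le hk hχ
    exact Finset.mem_biUnion.mpr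
      ⟨T, Finset.mem_powersetCard_univ.mpr hcard, Fintype.mem_piFinset.mpr hmem⟩
  have hcolorings : ∀ T ∈ Finset.univ.powersetCard k,
      (colorings T).card ≤ k ^ Fintype.card S := by
    intro T hT
    simp only [colorings, Fintype.card_piFinset, Finset.prod_const, Finset.card_univ,
      Finset.mem_powersetCard_univ.mp hT, le_refl]
  calc {χ : S → α | (Set.range χ).ncard ≤ k}.ncard
      ≤ ((Finset.univ.powersetCard k).biUnion colorings).card :=
        (Set.ncard_le_ncard hcover).trans_eq (Set.ncard_coe_finset _)
    _ ≤ (Finset.univ.powersetCard k).card * k ^ Fintype.card S :=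
        Finset.card_biUnion_le_card_mul _ _ _ hcolorings
    _ = (Fintype.card α).choose k * k ^ Fintype.card S := by
        rw [Finset.card_powersetCard, Finset.card_univ]

end Counting

theorem choose_mul_pow_self_le_exp_mul_pow (n k : ℕ) :
    (n.choose k : ℝ) * (k : ℝ) ^ k ≤ Real.exp k * (n : ℝ) ^ k :=
  calc (n.choose k : ℝ) * (k : ℝ) ^ k
      ≤ (n : ℝ) ^ k / k.factorial * (k : ℝ) ^ k := by
        gcongr
        exact Nat.choose_le_pow_div k n
    _ = (k : ℝ) ^ k / k.factorial * (n : ℝ) ^ k := by ring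
    _ ≤ Real.exp k * (n : ℝ) ^ k := by
        gcongr
        exact Real.pow_div_factorial_le_exp _ k.cast_nonneg k

theorem choose_mul_pow_le_exp_mul_pow {n k ν : ℕ} {a : ℝ} (hkν : k ≤ ν)
    (hkn : (k : ℝ) * Real.exp a ≤ n) :
    (n.choose k : ℝ) * (k : ℝ) ^ ν ≤ Real.exp (k - a * (ν - k)) * (n : ℝ) ^ ν := by
  obtain ⟨m, rfl⟩ := Nat.exists_eq_add_of_le hkν
  have hk : (k : ℝ) ≤ Real.exp (-a) * n := by
    rwa [Real.exp_neg, ← div_eq_inv_mul, le_div_iff₀ (Real.exp_pos a)]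
  calc (n.choose k : ℝ) * (k : ℝ) ^ (k + m)
      = (n.choose k : ℝ) * (k : ℝ) ^ k * (k : ℝ) ^ m := by ring
    _ ≤ Real.exp k * (n : ℝ) ^ k * (Real.exp (-a) * n) ^ m := by
        gcongr ?_ * ?_ ^ m
        exact choose_mul_pow_self_le_exp_mul_pow n k
    _ = Real.exp k * Real.exp (m * -a) * (n : ℝ) ^ (k + m) := by
        rw [Real.exp_nat_mul]
        ring
    _ = Real.exp (k - a * ((k + m : ℕ) - k)) * (n : ℝ) ^ (k + m) := by
        rw [← Real.exp_add]
        push_cast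
        ring_nf

theorem three_mul_div_exp_two_le {x : ℝ} (hx : 0 ≤ x) : 3 * (x / Real.exp 2) ≤ x := by
  have three_le_exp_two : (3 : ℝ) ≤ Real.exp 2 := by linarith [Real.add_one_le_exp (2 : ℝ)]
  rw [← mul_div_assoc, div_le_iff₀' (Real.exp_pos 2)]
  gcongr

section Tail

variable {S α : Type*} [Fintype S] [Fintype α]

theorem ncard_setOf_ncard_range_le_le_exp_mul_pow {k : ℕ} {a : ℝ} (ha : 0 ≤ a)
    (hkS : k ≤ Fintype.card S) (hkα : (k : ℝ) * Real.exp a ≤ Fintype.card α) :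
    ({χ : S → α | (Set.range χ).ncard ≤ k}.ncard : ℝ) ≤
      Real.exp (k - a * (Fintype.card S - k)) * (Fintype.card α : ℝ) ^ Fintype.card S := by
  have hk : k ≤ Fintype.card α := by
    exact_mod_cast (le_mul_of_one_le_right k.cast_nonneg (Real.one_le_exp ha)).trans hkα
  calc ({χ : S → α | (Set.range χ).ncard ≤ k}.ncard : ℝ)
      ≤ ((Fintype.card α).choose k : ℝ) * (k : ℝ) ^ Fintype.card S := by
        exact_mod_cast ncard_setOf_ncard_range_le_le_choose_mul_pow hk
    _ ≤ _ := choose_mul_pow_le_exp_mul_pow hkS hkα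

theorem few_colors_unlikely_general [Nonempty (S → α)] {t : ℝ} (htS : 3 * t ≤ Fintype.card S)
    (htα : t * Real.exp 2 ≤ Fintype.card α) :
    ({χ : S → α | ((Set.range χ).ncard : ℝ) < t}.ncard : ℝ) <
      Real.exp (-(Fintype.card S : ℝ)) * (Fintype.card α : ℝ) ^ Fintype.card S := by
  have hpow : (0 : ℝ) < (Fintype.card α : ℝ) ^ Fintype.card S := by
    classical exact_mod_cast Fintype.card_fun (α := S) (β := α) ▸ Fintype.card_pos
  rcases le_or_gt t 0 with ht | ht
  · have hempty : {χ : S → α | ((Set.range χ).ncard : ℝ) < t} = ∅ :=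
      Set.eq_empty_of_forall_notMem fun χ hχ => (hχ.trans_le ht).not_ge (Nat.cast_nonneg _)
    rw [hempty, Set.ncard_empty, Nat.cast_zero]
    positivity
  obtain ⟨k, hk⟩ := Nat.exists_eq_add_one.mpr (Nat.ceil_pos.mpr ht)
  have lt_iff_le (n : ℕ) : (n : ℝ) < t ↔ n ≤ k := by
    rw [← Nat.lt_ceil, hk, Nat.lt_add_one_iff]
  have hkt : (k : ℝ) < t := (lt_iff_le k).mpr le_rfl
  have hkS : k ≤ Fintype.card S := by
    have : (k : ℝ) ≤ Fintype.card S := by linarith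
    exact_mod_cast this
  have hkα : (k : ℝ) * Real.exp 2 ≤ Fintype.card α := le_trans (by gcongr) htα
  simp only [lt_iff_le]
  refine (ncard_setOf_ncard_range_le_le_exp_mul_pow zero_le_two hkS hkα).trans_lt ?_
  gcongr
  linarith

end Tail

/-- Let `S` be a finite set of `ν` objects, `ξ ≥ ν` an
integer, and `χ : S → {1,…,ξ}` a uniformly random coloring.  If `X = |χ(S)|`
is the number of distinct colors used on `S`, then
`Prob[X < ν/e²] < exp(−ν)`.  (Probability is modelled by counting colorings:
the number of colorings in the bad event is less than `exp(−ν)·ξ^ν`.) -/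
theorem few_colors_unlikely (S : Type*) [Fintype S] (ξ : ℕ)
    (hξ : Fintype.card S ≤ ξ) :
    (({χ : S → Fin ξ |
        ((Set.range χ).ncard : ℝ) <
          (Fintype.card S : ℝ) / Real.exp 2}).ncard : ℝ)
      < Real.exp (-(Fintype.card S : ℝ)) * (ξ : ℝ) ^ (Fintype.card S) := by
  have : Nonempty (S → Fin ξ) :=
    (Function.Embedding.nonempty_of_card_le (by rwa [Fintype.card_fin])).map (⇑)
  simpa only [Fintype.card_fin] using few_colors_unlikely_general (S := S) (α := Fin ξ)
    (three_mul_div_exp_two_le (Nat.cast_nonneg _)) (by simpa using hξ)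
end
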